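/- There exists a universal constant C > 0 such that for every dimension n and every isotropic random vector X in ℝⁿ with log-concave density, the thin-shell width satisfies √(Var(|X|)) ≤ C·n^{1/2 − 1/6} = C·n^{1/3}. -/

import Mathlib

open MeasureTheory ProbabilityTheory Real
open scoped ENNReal RealInnerProductSpace Pointwise NNReal

noncomputable section

/-- A nonnegative function is log-concave if `f(λx+(1-λ)y) ≥ f(x)^λ f(y)^{1-λ}`. -/
def IsLogConcaveFn {E : Type*} [AddCommGroup E] [Module ℝ E] (f : E → ℝ) : Prop :=
  (∀ x, 0 ≤ f x) ∧
  ∀ x y : E, ∀ l : ℝ, 0 ≤ l → l ≤ 1 →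
    f x ^ l * f y ^ (1 - l) ≤ f (l • x + (1 - l) • y)

/-- Hilbert-Schmidt (Frobenius) norm of a matrix. -/
def hsNorm {n : ℕ} (A : Matrix (Fin n) (Fin n) ℝ) : ℝ :=
  Real.sqrt (∑ i, ∑ j, (A i j) ^ 2)

/-- Operator norm of a matrix acting on Euclidean space. -/
def opNorm {n : ℕ} (A : Matrix (Fin n) (Fin n) ℝ) : ℝ :=
  ‖LinearMap.toContinuousLinearMap (Matrix.toEuclideanLin A)‖

/-- Application of a matrix to a Euclidean vector. -/
def mApp {n : ℕ} (A : Matrix (Fin n) (Fin n) ℝ) (x : EuclideanSpace ℝ (Fin n)) :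
    EuclideanSpace ℝ (Fin n) := Matrix.toEuclideanLin A x

/-- The random vector `X` has density `f` with respect to Lebesgue measure. -/
def HasDensityFn {Ω : Type*} [MeasurableSpace Ω] (P : Measure Ω) {n : ℕ}
    (X : Ω → EuclideanSpace ℝ (Fin n)) (f : EuclideanSpace ℝ (Fin n) → ℝ) : Prop :=
  Measurable X ∧ Measure.map X P = volume.withDensity fun x => ENNReal.ofReal (f x)

/-- `X` is isotropic: centered with identity covariance. -/
def Isotropic {Ω : Type*} [MeasurableSpace Ω] (P : Measure Ω) {n : ℕ}
    (X : Ω → EuclideanSpace ℝ (Fin n)) : Prop :=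
  (∫ ω, X ω ∂P) = 0 ∧
  ∀ θ η : EuclideanSpace ℝ (Fin n), (∫ ω, ⟪X ω, θ⟫ * ⟪X ω, η⟫ ∂P) = ⟪θ, η⟫

/-- `X` is ψ_α with constant `b`. -/
def IsPsiAlpha {Ω : Type*} [MeasurableSpace Ω] (P : Measure Ω) {n : ℕ}
    (X : Ω → EuclideanSpace ℝ (Fin n)) (α b : ℝ) : Prop :=
  ∀ p : ℝ, 2 ≤ p → ∀ y : EuclideanSpace ℝ (Fin n),
    (∫ ω, |⟪X ω, y⟫| ^ p ∂P) ^ (1/p) ≤ b * p ^ (1/α) * (∫ ω, ⟪X ω, y⟫ ^ 2 ∂P) ^ ((1:ℝ)/2)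

/-- `G` is a standard Gaussian random vector in `ℝⁿ`. -/
def IsStdGaussian {Ω : Type*} [MeasurableSpace Ω] (P : Measure Ω) {n : ℕ}
    (G : Ω → EuclideanSpace ℝ (Fin n)) : Prop :=
  Measurable G ∧
  Measure.map G P = volume.withDensity fun x =>
    ENNReal.ofReal ((2 * π) ^ (-(n:ℝ)/2) * Real.exp (-‖x‖ ^ 2 / 2))

/-- Surface area of the unit sphere `S^{k-1}` in `ℝᵏ`. -/
def sphereVol (k : ℕ) : ℝ := 2 * π ^ ((k : ℝ)/2) / Real.Gamma ((k : ℝ)/2)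

/-- The marginal density `π_F g(x) = ∫_{F^⊥} g(x+y) dy`. -/
def marginalDensity {n : ℕ} (g : EuclideanSpace ℝ (Fin n) → ℝ)
    (F : Submodule ℝ (EuclideanSpace ℝ (Fin n))) (x : EuclideanSpace ℝ (Fin n)) : ℝ :=
  ∫ y : Fᗮ, g (x + y)

/-- `h_{k,p}(u) = vol(S^{k-1}) ∫₀^∞ t^{p+k-1} π_{u(E₀)} g(t u(θ₀)) dt`. -/
def hkp {n : ℕ} (g : EuclideanSpace ℝ (Fin n) → ℝ)
    (E₀ : Submodule ℝ (EuclideanSpace ℝ (Fin n))) (θ₀ : EuclideanSpace ℝ (Fin n))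
    (k : ℕ) (p : ℝ) (u : Matrix (Fin n) (Fin n) ℝ) : ℝ :=
  sphereVol k * ∫ t in Set.Ioi (0:ℝ), t ^ (p + (k:ℝ) - 1) *
    marginalDensity g (Submodule.map (Matrix.toEuclideanLin u) E₀) (t • mApp u θ₀)

/-- Support functional of the one-sided L_q-centroid body `Z⁺_q(w)`. -/
def suppZplus {m : ℕ} (w : EuclideanSpace ℝ (Fin m) → ℝ) (q : ℝ)
    (y : EuclideanSpace ℝ (Fin m)) : ℝ :=
  (2 * ∫ x, (max ⟪x, y⟫ 0) ^ q * w x) ^ (1/q)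

/-- Ball's body `K_q(w) = {x : q ∫₀^∞ t^{q-1} w(tx) dt ≥ 1}`. -/
def ballBody {m : ℕ} (w : EuclideanSpace ℝ (Fin m) → ℝ) (q : ℝ) :
    Set (EuclideanSpace ℝ (Fin m)) :=
  {x | 1 ≤ q * ∫ t in Set.Ioi (0:ℝ), t ^ (q-1) * w (t • x)}

/-- The one-sided L_q-centroid body `Z⁺_q(w)`, as the convex set with support
functional `suppZplus w q`. -/
def ZplusBody {m : ℕ} (w : EuclideanSpace ℝ (Fin m) → ℝ) (q : ℝ) :
    Set (EuclideanSpace ℝ (Fin m)) :=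
  {x | ∀ y, ⟪x, y⟫ ≤ suppZplus w q y}

/-! By Borell's lemma the part of a log-concave law outside the ball of radius `12 √n` costs only a
constant factor in `Var |x|`, so let `X` have the law conditioned on that ball. Given `r > 0`, let
`G` be an independent standard Gaussian and condition `X` on `r X + G = g`: this multiplies the
density by `exp (r ⟨g, x⟩ - r² |x|² / 2)` up to normalization. The quadratic term makes the
conditional law strongly log-concave, so Maurey's property (τ) bounds the variance of every
`1`-Lipschitz function under it by `O(1 / r²)`. What remains is the fluctuation in `g` of the
conditional means. Averaging over Gaussian `g` turns it into expectations over two independent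
copies `X`, `Y` with kernel `exp (r² ⟨X, Y⟩)`, which are controlled by `r⁴ E ⟨X, Y⟩² ≲ n r⁴` since
`⟨X, Y⟩` has exponential tails. For the norm, of size `√n`, this reads
`Var |x| ≲ 1 / r² + n (r² + n r⁴)`, and `r ~ n ^ (-1 / 3)` makes the bound `n ^ (2 / 3)`. -/

section MidpointLogConcave

/-- Log-concavity of a measure in functional form: the Prékopa–Leindler inequality holds for `μ` at
midpoints. -/
def IsMidpointLogConcave {E : Type*} [AddCommGroup E] [Module ℝ E] [MeasurableSpace E]
    (μ : Measure E) : Prop :=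
  ∀ ⦃F G H : E → ℝ≥0∞⦄, Measurable F → Measurable G → Measurable H →
    (∀ x y, F x * G y ≤ H (midpoint ℝ x y) ^ 2) →
    (∫⁻ x, F x ∂μ) * ∫⁻ x, G x ∂μ ≤ (∫⁻ x, H x ∂μ) ^ 2

lemma volume_add_volume_le_of_isCompact {K L : Set ℝ} (hK : IsCompact K) (hL : IsCompact L)
    (hK₀ : K.Nonempty) (hL₀ : L.Nonempty) : volume K + volume L ≤ volume (K + L) := by
  obtain ⟨a, haK, ha⟩ := hK.exists_isGreatest hK₀
  obtain ⟨b, hbL, hb⟩ := hL.exists_isLeast hL₀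
  -- The translates `K + b` and `a + L` overlap at most in the point `a + b`.
  have hdisj : AEDisjoint volume ((· + b) '' K) ((a + ·) '' L) := by
    refine measure_mono_null (t := {a + b}) ?_ (measure_singleton _)
    rintro _ ⟨⟨x, hx, rfl⟩, ⟨y, hy, hxy⟩⟩
    have hxa := ha hx
    have hby := hb hy
    simp only [Set.mem_singleton_iff] at hxy ⊢
    linarith
  have hmeas : NullMeasurableSet ((a + ·) '' L) volume :=
    (hL.image (by fun_prop)).measurableSet.nullMeasurableSet
  calc volume K + volume L = volume ((· + b) '' K) + volume ((a + ·) '' L) := by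
        simp [Set.image_add_right, Set.image_add_left]
    _ = volume ((· + b) '' K ∪ (a + ·) '' L) := (measure_union₀ hmeas hdisj).symm
    _ ≤ volume (K + L) := by
        refine measure_mono (Set.union_subset ?_ ?_)
        · exact Set.image_subset_iff.2 fun x hx => Set.add_mem_add hx hbL
        · exact Set.image_subset_iff.2 fun y hy => Set.add_mem_add haK hy

lemma volume_add_volume_le {A B : Set ℝ} (hA : MeasurableSet A) (hB : MeasurableSet B)
    (hA₀ : A.Nonempty) (hB₀ : B.Nonempty) : volume A + volume B ≤ volume (A + B) := by
  obtain ⟨a, ha⟩ := hA₀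
  obtain ⟨b, hb⟩ := hB₀
  rw [hA.measure_eq_iSup_isCompact, hB.measure_eq_iSup_isCompact]
  simp only [iSup_and']
  refine ENNReal.biSup_add_biSup_le' ⟨∅, by simp⟩ ⟨∅, by simp⟩ fun K ⟨hKA, hK⟩ L ⟨hLB, hL⟩ => ?_
  calc volume K + volume L ≤ volume (insert a K) + volume (insert b L) := by
        gcongr <;> exact Set.subset_insert _ _
    _ ≤ volume (insert a K + insert b L) :=
        volume_add_volume_le_of_isCompact (hK.insert a) (hL.insert b) (Set.insert_nonempty a K)
          (Set.insert_nonempty b L)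
    _ ≤ volume (A + B) :=
        measure_mono (Set.add_subset_add (Set.insert_subset ha hKA) (Set.insert_subset hb hLB))

lemma volume_add_volume_le_two_mul_of_midpoint_mem {A B C : Set ℝ} (hA : MeasurableSet A)
    (hB : MeasurableSet B) (hA₀ : A.Nonempty) (hB₀ : B.Nonempty)
    (hC : ∀ x ∈ A, ∀ y ∈ B, midpoint ℝ x y ∈ C) : volume A + volume B ≤ 2 * volume C := by
  have hsub : A + B ⊆ ((2 : ℝ)⁻¹ * ·) ⁻¹' C := by
    rintro _ ⟨x, hx, y, hy, rfl⟩
    simpa [midpoint_eq_smul_add] using hC x hx y hy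
  calc volume A + volume B ≤ volume (((2 : ℝ)⁻¹ * ·) ⁻¹' C) :=
        (volume_add_volume_le hA hB hA₀ hB₀).trans (measure_mono hsub)
    _ = 2 * volume C := by rw [Real.volume_preimage_mul_left (by norm_num)]; simp

lemma lintegral_min_one_eq_setLIntegral_measure_lt {α : Type*} [MeasurableSpace α] (μ : Measure α)
    {F : α → ℝ≥0∞} (hF : Measurable F) :
    ∫⁻ x, min (F x) 1 ∂μ = ∫⁻ t in Set.Ioo (0 : ℝ) 1, μ {x | ENNReal.ofReal t < F x} := by
  have hfin : ∀ x, min (F x) 1 ≠ ⊤ := fun x => ne_top_of_le_ne_top ENNReal.one_ne_top inf_le_right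
  have hlt : ∀ t : ℝ, 0 < t →
      {x | t < (min (F x) 1).toReal} = {x | ENNReal.ofReal t < F x ∧ t < 1} := fun t ht => by
    ext x
    simp [← ENNReal.ofReal_lt_iff_lt_toReal ht.le (hfin x)]
  calc ∫⁻ x, min (F x) 1 ∂μ = ∫⁻ x, ENNReal.ofReal (min (F x) 1).toReal ∂μ := by
        simp only [ENNReal.ofReal_toReal (hfin _)]
    _ = ∫⁻ t in Set.Ioi (0 : ℝ), μ {x | t < (min (F x) 1).toReal} :=
        lintegral_eq_lintegral_meas_lt μ (ae_of_all _ fun x => ENNReal.toReal_nonneg)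
          (hF.min measurable_const).ennreal_toReal.aemeasurable
    _ = ∫⁻ t in Set.Ioi (0 : ℝ),
          (Set.Iio 1).indicator (fun t => μ {x | ENNReal.ofReal t < F x}) t := by
        refine setLIntegral_congr_fun measurableSet_Ioi fun t ht => ?_
        by_cases h1 : t < 1 <;> simp [hlt t ht, h1]
    _ = ∫⁻ t in Set.Ioo (0 : ℝ) 1, μ {x | ENNReal.ofReal t < F x} := by
        rw [setLIntegral_indicator measurableSet_Iio, Set.inter_comm, Set.Ioi_inter_Iio]

variable {F G H : ℝ → ℝ≥0∞}

lemma lintegral_add_lintegral_le_of_iSup_eq_one (hF : Measurable F) (hG : Measurable G)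
    (hH : Measurable H) (hF₁ : ⨆ x, F x = 1) (hG₁ : ⨆ x, G x = 1)
    (h : ∀ x y, F x * G y ≤ H (midpoint ℝ x y) ^ 2) :
    (∫⁻ x, F x) + ∫⁻ x, G x ≤ 2 * ∫⁻ x, H x := by
  have hlevel : ∀ t ∈ Set.Ioo (0 : ℝ) 1,
      volume {x | ENNReal.ofReal t < F x} + volume {x | ENNReal.ofReal t < G x} ≤
        2 * volume {x | ENNReal.ofReal t < H x} := fun t ht => by
    have ht1 : ENNReal.ofReal t < 1 := by simpa using ht.2
    refine volume_add_volume_le_two_mul_of_midpoint_mem (measurableSet_lt measurable_const hF)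
      (measurableSet_lt measurable_const hG) (lt_iSup_iff.1 (ht1.trans_eq hF₁.symm))
      (lt_iSup_iff.1 (ht1.trans_eq hG₁.symm)) fun x hx y hy => ?_
    refine lt_of_pow_lt_pow_left' (M := ℝ≥0∞) 2 ?_
    calc ENNReal.ofReal t ^ 2 = ENNReal.ofReal t * ENNReal.ofReal t := sq _
      _ < F x * G y := ENNReal.mul_lt_mul hx hy
      _ ≤ H (midpoint ℝ x y) ^ 2 := h x y
  have hmeas : Measurable fun t : ℝ => volume {x | ENNReal.ofReal t < F x} :=
    Antitone.measurable fun s t hst => measure_mono fun x hx =>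
      (ENNReal.ofReal_le_ofReal hst).trans_lt hx
  have hmin : ∀ {P : ℝ → ℝ≥0∞}, Measurable P → ⨆ x, P x = 1 →
      ∫⁻ x, P x = ∫⁻ t in Set.Ioo (0 : ℝ) 1, volume {x | ENNReal.ofReal t < P x} := fun hP hP₁ => by
    rw [← lintegral_min_one_eq_setLIntegral_measure_lt volume hP]
    exact lintegral_congr fun x => (min_eq_left (hP₁ ▸ le_iSup _ x)).symm
  calc (∫⁻ x, F x) + ∫⁻ x, G x
      = ∫⁻ t in Set.Ioo (0 : ℝ) 1,
          (volume {x | ENNReal.ofReal t < F x} + volume {x | ENNReal.ofReal t < G x}) := by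
        rw [hmin hF hF₁, hmin hG hG₁, lintegral_add_left hmeas]
    _ ≤ ∫⁻ t in Set.Ioo (0 : ℝ) 1, 2 * volume {x | ENNReal.ofReal t < H x} :=
        setLIntegral_mono' measurableSet_Ioo hlevel
    _ = 2 * ∫⁻ x, min (H x) 1 := by
        rw [lintegral_const_mul' _ _ (by norm_num),
          lintegral_min_one_eq_setLIntegral_measure_lt _ hH]
    _ ≤ 2 * ∫⁻ x, H x := by gcongr; exact min_le_left _ _

lemma four_mul_mul_le_add_sq (x y : ℝ≥0∞) : 4 * (x * y) ≤ (x + y) ^ 2 := by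
  rcases eq_or_ne x ⊤ with rfl | hx
  · simp
  rcases eq_or_ne y ⊤ with rfl | hy
  · simp
  lift x to ℝ≥0 using hx
  lift y to ℝ≥0 using hy
  rw [← mul_assoc]
  exact_mod_cast four_mul_le_sq_add x y

lemma lintegral_mul_lintegral_le_of_bounded (hF : Measurable F) (hG : Measurable G)
    (hH : Measurable H) (hF_top : ⨆ x, F x ≠ ⊤) (hG_top : ⨆ x, G x ≠ ⊤)
    (h : ∀ x y, F x * G y ≤ H (midpoint ℝ x y) ^ 2) :
    (∫⁻ x, F x) * ∫⁻ x, G x ≤ (∫⁻ x, H x) ^ 2 := by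
  set a := ⨆ x, F x with ha
  set b := ⨆ x, G x with hb
  rcases eq_or_ne a 0 with ha₀ | ha₀
  · simp [ENNReal.iSup_eq_zero.1 ha₀]
  rcases eq_or_ne b 0 with hb₀ | hb₀
  · simp [ENNReal.iSup_eq_zero.1 hb₀]
  obtain ⟨c, hc⟩ : ∃ c : ℝ≥0∞, c ^ 2 = a⁻¹ * b⁻¹ := by
    refine ⟨(a⁻¹ * b⁻¹) ^ (2⁻¹ : ℝ), ?_⟩
    rw [← ENNReal.rpow_natCast, ← ENNReal.rpow_mul]
    norm_num
  have hadd : a⁻¹ * (∫⁻ x, F x) + b⁻¹ * ∫⁻ x, G x ≤ 2 * (c * ∫⁻ x, H x) := by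
    rw [← lintegral_const_mul _ hF, ← lintegral_const_mul _ hG, ← lintegral_const_mul _ hH]
    refine lintegral_add_lintegral_le_of_iSup_eq_one (hF.const_mul _) (hG.const_mul _)
      (hH.const_mul _) ?_ ?_ fun x y => ?_
    · rw [← ENNReal.mul_iSup, ← ha, ENNReal.inv_mul_cancel ha₀ hF_top]
    · rw [← ENNReal.mul_iSup, ← hb, ENNReal.inv_mul_cancel hb₀ hG_top]
    · rw [mul_pow, hc, mul_mul_mul_comm]
      gcongr
      exact h x y
  have hscaled : 4 * (a⁻¹ * b⁻¹) * ((∫⁻ x, F x) * ∫⁻ x, G x) ≤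
      4 * (a⁻¹ * b⁻¹) * (∫⁻ x, H x) ^ 2 :=
    calc 4 * (a⁻¹ * b⁻¹) * ((∫⁻ x, F x) * ∫⁻ x, G x)
        = 4 * (a⁻¹ * (∫⁻ x, F x) * (b⁻¹ * ∫⁻ x, G x)) := by ring
      _ ≤ (2 * (c * ∫⁻ x, H x)) ^ 2 :=
          (four_mul_mul_le_add_sq _ _).trans (pow_le_pow_left' hadd 2)
      _ = 4 * (a⁻¹ * b⁻¹) * (∫⁻ x, H x) ^ 2 := by rw [mul_pow, mul_pow, hc]; ring
  refine (ENNReal.mul_le_mul_iff_right ?_ ?_).1 hscaled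
  · simp [hF_top, hG_top]
  · exact ENNReal.mul_ne_top (by norm_num)
      (ENNReal.mul_ne_top (ENNReal.inv_ne_top.2 ha₀) (ENNReal.inv_ne_top.2 hb₀))

lemma lintegral_eq_iSup_lintegral_min_natCast {α : Type*} [MeasurableSpace α] (μ : Measure α)
    {P : α → ℝ≥0∞} (hP : Measurable P) :
    ∫⁻ x, P x ∂μ = ⨆ k : ℕ, ∫⁻ x, min (P x) k ∂μ := by
  rw [← lintegral_iSup (fun k => hP.min measurable_const)
    fun i j hij x => min_le_min le_rfl (Nat.mono_cast hij)]
  exact lintegral_congr fun x => by rw [← inf_iSup_eq, ENNReal.iSup_natCast, inf_top_eq]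

lemma isMidpointLogConcave_volume_real : IsMidpointLogConcave (volume : Measure ℝ) := by
  intro F G H hF hG hH h
  have hbdd : ∀ (P : ℝ → ℝ≥0∞) (k : ℕ), ⨆ x, min (P x) k ≠ ⊤ := fun P k =>
    ne_top_of_le_ne_top (ENNReal.natCast_ne_top k) (iSup_le fun x => min_le_right _ _)
  rw [lintegral_eq_iSup_lintegral_min_natCast _ hF, lintegral_eq_iSup_lintegral_min_natCast _ hG]
  simp only [ENNReal.iSup_mul, ENNReal.mul_iSup]
  exact iSup₂_le fun i j => lintegral_mul_lintegral_le_of_bounded (hF.min measurable_const)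
    (hG.min measurable_const) hH (hbdd F _) (hbdd G _)
    fun x y => (mul_le_mul' (min_le_left _ _) (min_le_left _ _)).trans (h x y)

variable {E E' : Type*} [AddCommGroup E] [Module ℝ E] [MeasurableSpace E] [AddCommGroup E']
  [Module ℝ E'] [MeasurableSpace E'] {μ : Measure E} {ν : Measure E'}

lemma IsMidpointLogConcave.prod [SFinite ν] (hμ : IsMidpointLogConcave μ)
    (hν : IsMidpointLogConcave ν) : IsMidpointLogConcave (μ.prod ν) := by
  intro F G H hF hG hH h
  rw [lintegral_prod _ hF.aemeasurable, lintegral_prod _ hG.aemeasurable,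
    lintegral_prod _ hH.aemeasurable]
  refine hμ hF.lintegral_prod_right' hG.lintegral_prod_right' hH.lintegral_prod_right' fun x y =>
    hν (hF.comp measurable_prodMk_left) (hG.comp measurable_prodMk_left)
      (hH.comp measurable_prodMk_left) fun x' y' => ?_
  simpa [midpoint_eq_smul_add] using h (x, x') (y, y')

lemma IsMidpointLogConcave.map (hμ : IsMidpointLogConcave μ) {T : E →ₗ[ℝ] E'}
    (hT : Measurable T) : IsMidpointLogConcave (μ.map T) := by
  intro F G H hF hG hH h
  rw [lintegral_map hF hT, lintegral_map hG hT, lintegral_map hH hT]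
  refine hμ (hF.comp hT) (hG.comp hT) (hH.comp hT) fun x y => ?_
  exact (h (T x) (T y)).trans_eq (by simp only [midpoint_eq_smul_add, map_smul, map_add])

lemma isMidpointLogConcave_volume_pi (n : ℕ) :
    IsMidpointLogConcave (volume : Measure (Fin n → ℝ)) := by
  induction n with
  | zero =>
    intro F G H _ _ _ h
    simpa [volume_pi, Measure.pi_of_empty _ (0 : Fin 0 → ℝ)] using h 0 0
  | succ n ih =>
    have hcons : MeasurePreserving (Fin.consLinearEquiv ℝ fun _ : Fin (n + 1) => ℝ)
        (volume.prod volume) volume := by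
      have hfun : ⇑(Fin.consLinearEquiv ℝ fun _ : Fin (n + 1) => ℝ) =
          (MeasurableEquiv.piFinSuccAbove (fun _ : Fin (n + 1) => ℝ) 0).symm :=
        funext fun p => (Fin.insertNth_zero' p.1 p.2).symm
      rw [hfun]
      exact (volume_preserving_piFinSuccAbove (fun _ : Fin (n + 1) => ℝ) 0).symm
    rw [← hcons.map_eq]
    exact (isMidpointLogConcave_volume_real.prod ih).map hcons.measurable

lemma isMidpointLogConcave_volume (E : Type*) [NormedAddCommGroup E] [InnerProductSpace ℝ E]
    [FiniteDimensional ℝ E] [MeasurableSpace E] [BorelSpace E] :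
    IsMidpointLogConcave (volume : Measure E) := by
  let b := stdOrthonormalBasis ℝ E
  let T : (Fin (Module.finrank ℝ E) → ℝ) ≃ₗ[ℝ] E :=
    (WithLp.linearEquiv 2 ℝ (Fin (Module.finrank ℝ E) → ℝ)).symm.trans b.repr.symm.toLinearEquiv
  have hT : MeasurePreserving T volume volume :=
    b.measurePreserving_repr_symm.comp (PiLp.volume_preserving_toLp _)
  rw [← hT.map_eq]
  exact (isMidpointLogConcave_volume_pi _).map hT.measurable

end MidpointLogConcave

section Density

variable {E : Type*} [AddCommGroup E] [Module ℝ E]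

lemma indicator_mul_indicator_le_sq_midpoint {K : Set E} (hK : Convex ℝ K) {w : E → ℝ≥0∞}
    (hw : ∀ x y, w x * w y ≤ w (midpoint ℝ x y) ^ 2) (x y : E) :
    K.indicator w x * K.indicator w y ≤ K.indicator w (midpoint ℝ x y) ^ 2 := by
  by_cases hx : x ∈ K
  · by_cases hy : y ∈ K
    · simpa [hx, hy, hK.midpoint_mem hx hy] using hw x y
    · simp [hy]
  · simp [hx]

section Measure

variable [MeasurableSpace E] {μ : Measure E}

lemma IsMidpointLogConcave.withDensity (hμ : IsMidpointLogConcave μ) {w : E → ℝ≥0∞}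
    (hw : Measurable w) (hw_mid : ∀ x y, w x * w y ≤ w (midpoint ℝ x y) ^ 2) :
    IsMidpointLogConcave (μ.withDensity w) := by
  intro F G H hF hG hH h
  simp only [lintegral_withDensity_eq_lintegral_mul _ hw hF,
    lintegral_withDensity_eq_lintegral_mul _ hw hG, lintegral_withDensity_eq_lintegral_mul _ hw hH]
  refine hμ (hw.mul hF) (hw.mul hG) (hw.mul hH) fun x y => ?_
  simp only [Pi.mul_apply, mul_pow, mul_mul_mul_comm (w x)]
  exact mul_le_mul' (hw_mid x y) (h x y)

lemma IsMidpointLogConcave.cond (hμ : IsMidpointLogConcave μ) {K : Set E} (hK : Convex ℝ K)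
    (hK_meas : MeasurableSet K) : IsMidpointLogConcave (μ[|K]) := by
  have hcond : μ[|K] = μ.withDensity (K.indicator fun _ => (μ K)⁻¹) := by
    rw [withDensity_indicator hK_meas, withDensity_const, ProbabilityTheory.cond]
  rw [hcond]
  exact hμ.withDensity (measurable_const.indicator hK_meas)
    (indicator_mul_indicator_le_sq_midpoint hK fun _ _ => (sq _).ge)

end Measure

lemma IsLogConcaveFn.mul_le_sq_midpoint {f : E → ℝ} (hf : IsLogConcaveFn f) (x y : E) :
    f x * f y ≤ f (midpoint ℝ x y) ^ 2 := by
  have h := hf.2 x y 2⁻¹ (by norm_num) (by norm_num)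
  rw [show (1 : ℝ) - 2⁻¹ = 2⁻¹ by norm_num, ← smul_add, ← Real.mul_rpow (hf.1 x) (hf.1 y),
    Real.rpow_inv_le_iff_of_pos (mul_nonneg (hf.1 x) (hf.1 y)) (hf.1 _) two_pos] at h
  simpa [midpoint_eq_smul_add] using h

lemma IsLogConcaveFn.concaveOn_log {f : E → ℝ} (hf : IsLogConcaveFn f) :
    ConcaveOn ℝ {x | 0 < f x} fun x => Real.log (f x) := by
  have hpos : ∀ {x y}, 0 < f x → 0 < f y → ∀ {a b : ℝ}, 0 ≤ a → 0 ≤ b → a + b = 1 →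
      0 < f x ^ a * f y ^ b ∧ f x ^ a * f y ^ b ≤ f (a • x + b • y) := by
    intro x y hx hy a b ha hb hab
    obtain rfl : b = 1 - a := by linarith
    exact ⟨by positivity, hf.2 x y a ha (by linarith)⟩
  refine ⟨fun x hx y hy a b ha hb hab => ?_, fun x hx y hy a b ha hb hab => ?_⟩
  · obtain ⟨h0, hle⟩ := hpos hx hy ha hb hab
    exact h0.trans_le hle
  · obtain ⟨h0, hle⟩ := hpos hx hy ha hb hab
    have hlog := Real.log_le_log h0 hle
    rwa [Real.log_mul (Real.rpow_pos_of_pos hx a).ne' (Real.rpow_pos_of_pos hy b).ne',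
      Real.log_rpow hx, Real.log_rpow hy] at hlog

end Density

section FiniteDimensional

variable {E : Type*} [NormedAddCommGroup E] [MeasurableSpace E] [BorelSpace E] {f : E → ℝ}

lemma IsLogConcaveFn.measurable_indicator_interior_pos [NormedSpace ℝ E] [FiniteDimensional ℝ E]
    (hf : IsLogConcaveFn f) : Measurable ((interior {x | 0 < f x}).indicator f) := by
  classical
  have hpos : ∀ x ∈ interior {x | 0 < f x}, 0 < f x := fun _ hx =>
    interior_subset (s := {x | 0 < f x}) hx
  have hcont : ContinuousOn f (interior {x | 0 < f x}) :=
    (Real.continuous_exp.comp_continuousOn hf.concaveOn_log.continuousOn_interior).congr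
      fun x hx => (Real.exp_log (hpos x hx)).symm
  rw [← Set.piecewise_eq_indicator]
  exact hcont.measurable_piecewise continuousOn_const isOpen_interior.measurableSet

lemma IsLogConcaveFn.indicator_interior_pos_ae_eq [NormedSpace ℝ E] [FiniteDimensional ℝ E]
    (hf : IsLogConcaveFn f) (μ : Measure E) [μ.IsAddHaarMeasure] :
    (interior {x | 0 < f x}).indicator f =ᵐ[μ] f := by
  have hfrontier : ∀ᵐ x ∂μ, x ∉ frontier {x | 0 < f x} :=
    measure_eq_zero_iff_ae_notMem.1 (hf.concaveOn_log.1.addHaar_frontier μ)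
  filter_upwards [hfrontier] with x hx
  by_cases hx_int : x ∈ interior {x | 0 < f x}
  · exact Set.indicator_of_mem hx_int f
  · have hx_pos : ¬ 0 < f x := fun h => hx ⟨subset_closure h, hx_int⟩
    rw [Set.indicator_of_notMem hx_int, le_antisymm (not_lt.1 hx_pos) (hf.1 x)]

lemma IsLogConcaveFn.isMidpointLogConcave_withDensity [InnerProductSpace ℝ E]
    [FiniteDimensional ℝ E] (hf : IsLogConcaveFn f) :
    IsMidpointLogConcave (volume.withDensity fun x => ENNReal.ofReal (f x)) := by
  set U := interior {x | 0 < f x}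
  have hae : (fun x => ENNReal.ofReal (f x)) =ᵐ[volume] fun x => ENNReal.ofReal (U.indicator f x) :=
    (hf.indicator_interior_pos_ae_eq volume).symm.fun_comp ENNReal.ofReal
  have hind : ∀ x, ENNReal.ofReal (U.indicator f x) = U.indicator (ENNReal.ofReal ∘ f) x := fun x =>
    (Set.indicator_comp_of_zero ENNReal.ofReal_zero).symm ▸ rfl
  rw [withDensity_congr_ae hae]
  refine (isMidpointLogConcave_volume E).withDensity
    hf.measurable_indicator_interior_pos.ennreal_ofReal ?_
  simp only [hind]
  refine indicator_mul_indicator_le_sq_midpoint hf.concaveOn_log.1.interior fun x y => ?_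
  rw [Function.comp_apply, Function.comp_apply, Function.comp_apply, ← ENNReal.ofReal_mul (hf.1 x),
    ← ENNReal.ofReal_pow (hf.1 _)]
  exact ENNReal.ofReal_le_ofReal (hf.mul_le_sq_midpoint x y)

end FiniteDimensional

section Borell

lemma exp_two_pow_mul_le (k : ℕ) : exp (2 ^ k) * (1 / 8) ^ 2 ^ k ≤ (1 / 2) ^ (k + 1) := by
  have hexp : exp (2 ^ k) = exp 1 ^ 2 ^ k := by rw [← Real.exp_nat_mul]; simp
  calc exp (2 ^ k) * (1 / 8) ^ 2 ^ k = (exp 1 * (1 / 8)) ^ 2 ^ k := by rw [hexp, mul_pow]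
    _ ≤ (1 / 2) ^ 2 ^ k := by
        gcongr
        linarith [Real.exp_one_lt_d9]
    _ ≤ (1 / 2) ^ (k + 1) :=
        pow_le_pow_of_le_one (by norm_num) (by norm_num) Nat.lt_two_pow_self

lemma exists_dyadic_le_and_exp_le {r s : ℝ} (hr : 0 < r) (hs : r ≤ s) :
    ∃ k : ℕ, r * (2 ^ (k + 1) - 1) ≤ s ∧ exp (s / (4 * r)) ≤ exp (2 ^ k) := by
  have hone : 1 ≤ (s / r + 1) / 2 := by linarith [(one_le_div hr).2 hs]
  obtain ⟨k, hk, hk'⟩ := exists_nat_pow_near hone one_lt_two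
  have hsr : s / r * r = s := div_mul_cancel₀ s hr.ne'
  refine ⟨k, ?_, Real.exp_le_exp.2 ((div_le_iff₀ (by positivity)).2 ?_)⟩
  · nlinarith [pow_succ (2 : ℝ) k]
  · nlinarith [pow_succ (2 : ℝ) k]

variable {E : Type*} [AddCommGroup E] [Module ℝ E]

lemma seminorm_le_two_mul_midpoint_add (p : Seminorm ℝ E) (x y : E) :
    p x ≤ 2 * p (midpoint ℝ x y) + p y := by
  have hx : x = (2 : ℝ) • midpoint ℝ x y - y := by simp [midpoint_eq_smul_add]
  calc p x = p ((2 : ℝ) • midpoint ℝ x y - y) := by rw [← hx]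
    _ ≤ p ((2 : ℝ) • midpoint ℝ x y) + p y := map_sub_le_add p _ _
    _ = 2 * p (midpoint ℝ x y) + p y := by rw [map_smul_eq_mul, Real.norm_two]

variable [MeasurableSpace E] {μ : Measure E} [IsProbabilityMeasure μ] {p : Seminorm ℝ E}

lemma IsMidpointLogConcave.measureReal_le_mul_le_sq (hμ : IsMidpointLogConcave μ)
    (hp : Measurable p) (r s : ℝ) :
    μ.real {x | 2 * s + r ≤ p x} * (1 - μ.real {x | r ≤ p x}) ≤ μ.real {x | s ≤ p x} ^ 2 := by
  have hmeas : ∀ t : ℝ, MeasurableSet {x | t ≤ p x} := fun t => measurableSet_le measurable_const hp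
  have hmid : ∀ x y, {x | 2 * s + r ≤ p x}.indicator (1 : E → ℝ≥0∞) x *
      {x | r ≤ p x}ᶜ.indicator 1 y ≤ {x | s ≤ p x}.indicator 1 (midpoint ℝ x y) ^ 2 := fun x y => by
    by_cases hx : 2 * s + r ≤ p x
    · by_cases hy : r ≤ p y
      · simp [hy]
      · have hxy : s ≤ p (midpoint ℝ x y) := by linarith [seminorm_le_two_mul_midpoint_add p x y]
        simp [hx, hy, hxy]
    · simp [hx]
  have h := hμ (measurable_one.indicator (hmeas _)) (measurable_one.indicator (hmeas _).compl)
    (measurable_one.indicator (hmeas _)) hmid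
  rw [lintegral_indicator_one (hmeas _), lintegral_indicator_one (hmeas _).compl,
    lintegral_indicator_one (hmeas _)] at h
  rw [← probReal_compl_eq_one_sub (hmeas r), measureReal_def, measureReal_def, measureReal_def,
    ← ENNReal.toReal_mul, ← ENNReal.toReal_pow]
  exact ENNReal.toReal_mono (by finiteness) h

/-- Borell's tail estimate: iterating `measureReal_le_mul_le_sq` along `s ↦ 2 * s + r` squares the
tail at each doubling. -/
lemma IsMidpointLogConcave.measureReal_dyadic_le (hμ : IsMidpointLogConcave μ) (hp : Measurable p)
    {r : ℝ} (hr : μ.real {x | r ≤ p x} ≤ 1 / 9) (k : ℕ) :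
    μ.real {x | r * (2 ^ (k + 1) - 1) ≤ p x} ≤ 8 * μ.real {x | r ≤ p x} * (1 / 8) ^ 2 ^ k := by
  induction k with
  | zero => norm_num; linarith
  | succ k ih =>
    have hstep := hμ.measureReal_le_mul_le_sq hp r (r * (2 ^ (k + 1) - 1))
    rw [show 2 * (r * (2 ^ (k + 1) - 1)) + r = r * (2 ^ (k + 1 + 1) - 1) by ring] at hstep
    set a := μ.real {x | r ≤ p x}
    set b := μ.real {x | r * (2 ^ (k + 1 + 1) - 1) ≤ p x}
    have hb : b * (8 / 9) ≤ b * (1 - a) :=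
      mul_le_mul_of_nonneg_left (by linarith) measureReal_nonneg
    have ha : a * a ≤ 1 / 9 * a := mul_le_mul_of_nonneg_right hr measureReal_nonneg
    have hsq : b * (8 / 9) ≤ 64 * (1 / 9 * a) * (1 / 8) ^ 2 ^ (k + 1) :=
      calc b * (8 / 9) ≤ (8 * a * (1 / 8) ^ 2 ^ k) ^ 2 :=
            (hb.trans hstep).trans (pow_le_pow_left₀ measureReal_nonneg ih 2)
        _ = 64 * (a * a) * (1 / 8) ^ 2 ^ (k + 1) := by rw [mul_pow, ← pow_mul, pow_succ 2 k]; ring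
        _ ≤ 64 * (1 / 9 * a) * (1 / 8) ^ 2 ^ (k + 1) := by gcongr
    linarith

lemma IsMidpointLogConcave.setLIntegral_exp_seminorm_le (hμ : IsMidpointLogConcave μ)
    (hp : Measurable p) {r : ℝ} (hr₀ : 0 < r) (hr : μ.real {x | r ≤ p x} ≤ 1 / 9) :
    ∫⁻ x in {x | r ≤ p x}, ENNReal.ofReal (exp (p x / (4 * r))) ∂μ ≤
      ENNReal.ofReal (8 * μ.real {x | r ≤ p x}) := by
  have hmeas : ∀ t : ℝ, MeasurableSet {x | t ≤ p x} := fun t => measurableSet_le measurable_const hp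
  set a := μ.real {x | r ≤ p x}
  set S : ℕ → Set E := fun k => {x | r * (2 ^ (k + 1) - 1) ≤ p x}
  have hpointwise : ∀ x ∈ {x | r ≤ p x}, ENNReal.ofReal (exp (p x / (4 * r))) ≤
      ∑' k, (S k).indicator (fun _ => ENNReal.ofReal (exp (2 ^ k))) x := fun x hx => by
    obtain ⟨k, hk, hexp⟩ := exists_dyadic_le_and_exp_le hr₀ hx
    refine le_trans ?_ (ENNReal.le_tsum k)
    rw [Set.indicator_of_mem (show x ∈ S k from hk)]
    exact ENNReal.ofReal_le_ofReal hexp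
  have hterm : ∀ k : ℕ, ENNReal.ofReal (exp (2 ^ k)) * μ (S k) ≤
      ENNReal.ofReal (8 * a * (1 / 2) ^ (k + 1)) := fun k => by
    rw [← ofReal_measureReal, ← ENNReal.ofReal_mul (exp_pos _).le]
    refine ENNReal.ofReal_le_ofReal ?_
    calc exp (2 ^ k) * μ.real (S k) ≤ exp (2 ^ k) * (8 * a * (1 / 8) ^ 2 ^ k) := by
          gcongr
          exact hμ.measureReal_dyadic_le hp hr k
      _ = 8 * a * (exp (2 ^ k) * (1 / 8) ^ 2 ^ k) := by ring
      _ ≤ 8 * a * (1 / 2) ^ (k + 1) := by gcongr; exact exp_two_pow_mul_le k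
  have hsum : HasSum (fun k : ℕ => 8 * a * (1 / 2 : ℝ) ^ (k + 1)) (8 * a) := by
    have h := hasSum_geometric_two.mul_left (8 * a * (1 / 2))
    rw [show 8 * a * (1 / 2) * 2 = 8 * a by ring] at h
    exact h.congr_fun fun k => by rw [pow_succ]; ring
  calc ∫⁻ x in {x | r ≤ p x}, ENNReal.ofReal (exp (p x / (4 * r))) ∂μ
      ≤ ∫⁻ x, ∑' k, (S k).indicator (fun _ => ENNReal.ofReal (exp (2 ^ k))) x ∂μ :=
        (setLIntegral_mono' (hmeas r) hpointwise).trans (setLIntegral_le_lintegral _ _)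
    _ = ∑' k : ℕ, ENNReal.ofReal (exp (2 ^ k)) * μ (S k) := by
        rw [lintegral_tsum fun k => (measurable_const.indicator (hmeas _)).aemeasurable]
        exact tsum_congr fun k => lintegral_indicator_const (hmeas _) _
    _ ≤ ∑' k : ℕ, ENNReal.ofReal (8 * a * (1 / 2) ^ (k + 1)) := ENNReal.tsum_le_tsum hterm
    _ = ENNReal.ofReal (8 * a) := by
        rw [← ENNReal.ofReal_tsum_of_nonneg (fun k => by positivity) hsum.summable, hsum.tsum_eq]

lemma IsMidpointLogConcave.lintegral_exp_seminorm_le (hμ : IsMidpointLogConcave μ)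
    (hp : Measurable p) {r : ℝ} (hr₀ : 0 < r) (hr : μ.real {x | r ≤ p x} ≤ 1 / 9) :
    ∫⁻ x, ENNReal.ofReal (exp (p x / (4 * r))) ∂μ ≤ ENNReal.ofReal 3 := by
  have hlarge : ∫⁻ x in {x | r ≤ p x}, ENNReal.ofReal (exp (p x / (4 * r))) ∂μ ≤
      ENNReal.ofReal (8 / 9) :=
    (hμ.setLIntegral_exp_seminorm_le hp hr₀ hr).trans (ENNReal.ofReal_le_ofReal (by linarith))
  have hbound : ∀ x ∈ {x | r ≤ p x}ᶜ, ENNReal.ofReal (exp (p x / (4 * r))) ≤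
      ENNReal.ofReal 2 := fun x hx => by
    have hx' : p x < r := not_le.1 hx
    have hquarter : p x / (4 * r) ≤ 1 / 4 := by rw [div_le_iff₀ (by positivity)]; linarith
    refine ENNReal.ofReal_le_ofReal ?_
    calc exp (p x / (4 * r)) ≤ exp (log 2) := by gcongr; linarith [Real.log_two_gt_d9]
      _ = 2 := Real.exp_log two_pos
  have hsmall : ∫⁻ x in {x | r ≤ p x}ᶜ, ENNReal.ofReal (exp (p x / (4 * r))) ∂μ ≤
      ENNReal.ofReal 2 := by
    refine (setLIntegral_mono measurable_const hbound).trans ?_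
    rw [setLIntegral_const]
    exact mul_le_of_le_one_right' prob_le_one
  calc ∫⁻ x, ENNReal.ofReal (exp (p x / (4 * r))) ∂μ
      ≤ ENNReal.ofReal (8 / 9) + ENNReal.ofReal 2 := by
        rw [← lintegral_add_compl _ (measurableSet_le measurable_const hp)]
        exact add_le_add hlarge hsmall
    _ = ENNReal.ofReal (8 / 9 + 2) := (ENNReal.ofReal_add (by norm_num) (by norm_num)).symm
    _ ≤ ENNReal.ofReal 3 := ENNReal.ofReal_le_ofReal (by norm_num)

end Borell

section Variance

lemma two_add_sq_le_exp_add_exp_neg (u : ℝ) : 2 + u ^ 2 ≤ exp u + exp (-u) := by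
  have hsinh : (u / 2) ^ 2 ≤ sinh (u / 2) ^ 2 := by
    rw [sq_le_sq, abs_sinh]
    exact self_le_sinh_iff.2 (abs_nonneg _)
  have hcosh : exp u + exp (-u) = 2 * cosh (2 * (u / 2)) := by
    rw [mul_div_cancel₀ u two_ne_zero, cosh_eq]; ring
  rw [hcosh, cosh_two_mul, cosh_sq]
  linarith

variable {Ω : Type*} {mΩ : MeasurableSpace Ω} {μ : Measure Ω} [IsProbabilityMeasure μ]
  {X : Ω → ℝ} {t : ℝ}

lemma one_le_mgf_of_integral_eq_zero (hX : Integrable X μ)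
    (hexp : Integrable (fun ω => exp (t * X ω)) μ) (hcentered : μ[X] = 0) : 1 ≤ mgf X μ t := by
  calc 1 = ∫ ω, (t * X ω + 1) ∂μ := by
        rw [integral_add (hX.const_mul t) (integrable_const 1), integral_const_mul, hcentered]
        simp
    _ ≤ mgf X μ t := integral_mono ((hX.const_mul t).add (integrable_const 1)) hexp
        fun ω => add_one_le_exp (t * X ω)

lemma two_add_sq_mul_variance_le_mgf_add_mgf_neg (hX : MemLp X 2 μ)
    (hpos : Integrable (fun ω => exp (t * X ω)) μ) (hneg : Integrable (fun ω => exp (-t * X ω)) μ)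
    (hcentered : μ[X] = 0) : 2 + t ^ 2 * Var[X; μ] ≤ mgf X μ t + mgf X μ (-t) := by
  have hsq : Integrable (fun ω => t ^ 2 * X ω ^ 2) μ := hX.integrable_sq.const_mul _
  rw [variance_of_integral_eq_zero hX.aemeasurable hcentered]
  calc 2 + t ^ 2 * ∫ ω, X ω ^ 2 ∂μ = ∫ ω, (2 + t ^ 2 * X ω ^ 2) ∂μ := by
        rw [integral_add (integrable_const 2) hsq, integral_const_mul]
        simp
    _ ≤ ∫ ω, (exp (t * X ω) + exp (-t * X ω)) ∂μ :=
        integral_mono ((integrable_const 2).add hsq) (hpos.add hneg) fun ω => by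
          simpa only [mul_pow, neg_mul] using two_add_sq_le_exp_add_exp_neg (t * X ω)
    _ = mgf X μ t + mgf X μ (-t) := integral_add hpos hneg

lemma one_add_sq_mul_variance_le_mgf_mul_mgf_neg (hX : MemLp X 2 μ)
    (hpos : Integrable (fun ω => exp (t * X ω)) μ)
    (hneg : Integrable (fun ω => exp (-t * X ω)) μ) :
    1 + t ^ 2 * Var[X; μ] ≤ mgf X μ t * mgf X μ (-t) := by
  set Y : Ω → ℝ := fun ω => X ω + -μ[X]
  have hY : MemLp Y 2 μ := hX.add (memLp_const _)
  have hYcentered : μ[Y] = 0 := by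
    rw [integral_add (hX.integrable one_le_two) (integrable_const _)]
    simp
  have hYexp : ∀ s, Integrable (fun ω => exp (s * X ω)) μ → Integrable (fun ω => exp (s * Y ω)) μ :=
    fun s hs => by simpa only [Y, mul_add, exp_add] using hs.mul_const (exp (s * -μ[X]))
  have hvar : Var[X; μ] = Var[Y; μ] := (variance_add_const hX.1 _).symm
  have hmgf : mgf X μ t * mgf X μ (-t) = mgf Y μ t * mgf Y μ (-t) := by
    rw [mgf_add_const, mgf_add_const, mul_mul_mul_comm, ← exp_add]
    simp
  have hYint := hY.integrable one_le_two
  have hsum := two_add_sq_mul_variance_le_mgf_add_mgf_neg hY (hYexp t hpos) (hYexp (-t) hneg)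
    hYcentered
  have ht := one_le_mgf_of_integral_eq_zero hYint (hYexp t hpos) hYcentered
  have hnt := one_le_mgf_of_integral_eq_zero hYint (hYexp (-t) hneg) hYcentered
  rw [hvar, hmgf]
  linarith [mul_nonneg (sub_nonneg.2 ht) (sub_nonneg.2 hnt)]

end Variance

section Tilt

lemma integrable_of_ae_mem_isCompact {α : Type*} [TopologicalSpace α] [T2Space α]
    [MeasurableSpace α] [OpensMeasurableSpace α] {μ : Measure α} [IsFiniteMeasure μ] {K : Set α}
    (hK : IsCompact K) (hμK : ∀ᵐ x ∂μ, x ∈ K) {f : α → ℝ} (hf : Continuous f) :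
    Integrable f μ := by
  have h : IntegrableOn f K μ := hf.continuousOn.integrableOn_compact hK
  rwa [IntegrableOn, Measure.restrict_eq_self_of_ae_mem hμK] at h

lemma mul_sub_le_one_add_sq_mul_sq {E : Type*} [SeminormedAddCommGroup E] {φ : E → ℝ}
    (hφ : LipschitzWith 1 φ) (r : ℝ) (x y : E) : r * (φ x - φ y) ≤ 1 + r ^ 2 * ‖x - y‖ ^ 2 / 4 := by
  have hxy : (φ x - φ y) ^ 2 ≤ ‖x - y‖ ^ 2 := by
    have h := hφ.norm_sub_le x y
    rw [NNReal.coe_one, one_mul] at h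
    rw [← sq_abs (φ x - φ y)]
    exact pow_le_pow_left₀ (abs_nonneg _) h 2
  have hsq : r ^ 2 * (φ x - φ y) ^ 2 ≤ r ^ 2 * ‖x - y‖ ^ 2 :=
    mul_le_mul_of_nonneg_left hxy (sq_nonneg r)
  nlinarith [sq_nonneg (r * (φ x - φ y) / 2 - 1)]

variable {E : Type*} [NormedAddCommGroup E] [InnerProductSpace ℝ E]

/-- The logarithm of the density at `g`, relative to the standard Gaussian, of the Gaussian law with
mean `r • x` and identity covariance. Tilting the law of `X` by `gaussianExponent r g` therefore
gives the law of `X` conditioned on `r • X + G = g`, where `G` is an independent standard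
Gaussian. -/
def gaussianExponent (r : ℝ) (g x : E) : ℝ := r * ⟪g, x⟫ - r ^ 2 * ‖x‖ ^ 2 / 2

lemma continuous_gaussianExponent (r : ℝ) (g : E) : Continuous (gaussianExponent r g) := by
  unfold gaussianExponent
  fun_prop

lemma gaussianExponent_le (r : ℝ) (g x : E) : gaussianExponent r g x ≤ ‖g‖ ^ 2 / 2 := by
  have h := norm_sub_sq_real g (r • x)
  rw [inner_smul_right, norm_smul, mul_pow, norm_eq_abs, sq_abs] at h
  unfold gaussianExponent
  linarith [sq_nonneg ‖g - r • x‖]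

lemma gaussianExponent_add_gaussianExponent (r : ℝ) (g x y : E) :
    gaussianExponent r g x + gaussianExponent r g y =
      2 * gaussianExponent r g (midpoint ℝ x y) - r ^ 2 * ‖x - y‖ ^ 2 / 4 := by
  have hpar := parallelogram_law_with_norm ℝ x y
  simp only [gaussianExponent, midpoint_eq_smul_add, invOf_eq_inv, inner_smul_right,
    inner_add_right, norm_smul, norm_inv, Real.norm_two]
  linear_combination r ^ 2 / 4 * hpar

variable [MeasurableSpace E] [BorelSpace E] {μ : Measure E}

lemma integrable_exp_gaussianExponent [IsFiniteMeasure μ] (r : ℝ) (g : E) :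
    Integrable (fun x => exp (gaussianExponent r g x)) μ :=
  Integrable.of_bound (continuous_gaussianExponent r g).rexp.aestronglyMeasurable
    (exp (‖g‖ ^ 2 / 2)) (ae_of_all _ fun x => by
      rw [norm_eq_abs, abs_exp]
      exact exp_le_exp.2 (gaussianExponent_le r g x))

/-- The quadratic term of the exponent improves log-concavity to strong log-concavity. -/
lemma IsMidpointLogConcave.lintegral_tilted_mul_le (hμ : IsMidpointLogConcave μ) (r : ℝ) (g : E)
    {F G H : E → ℝ≥0∞} (hF : Measurable F) (hG : Measurable G) (hH : Measurable H)
    (h : ∀ x y, F x * G y ≤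
      ENNReal.ofReal (exp (r ^ 2 * ‖x - y‖ ^ 2 / 4)) * H (midpoint ℝ x y) ^ 2) :
    (∫⁻ x, F x ∂μ.tilted (gaussianExponent r g)) * ∫⁻ x, G x ∂μ.tilted (gaussianExponent r g) ≤
      (∫⁻ x, H x ∂μ.tilted (gaussianExponent r g)) ^ 2 := by
  set w := gaussianExponent r g
  set Z := ∫ x, exp (w x) ∂μ
  have hdensity_nonneg : ∀ x, 0 ≤ exp (w x) / Z := fun x =>
    div_nonneg (exp_pos _).le (integral_nonneg fun _ => (exp_pos _).le)
  have hdensity : Measurable fun x => ENNReal.ofReal (exp (w x) / Z) :=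
    ((continuous_gaussianExponent r g).rexp.div_const Z).measurable.ennreal_ofReal
  simp only [lintegral_tilted]
  refine hμ (hdensity.mul hF) (hdensity.mul hG) (hdensity.mul hH) fun x y => ?_
  have hw : exp (w x) / Z * (exp (w y) / Z) * exp (r ^ 2 * ‖x - y‖ ^ 2 / 4) =
      (exp (w (midpoint ℝ x y)) / Z) ^ 2 := by
    rw [div_mul_div_comm, ← exp_add, div_mul_eq_mul_div, ← exp_add,
      gaussianExponent_add_gaussianExponent, sub_add_cancel, div_pow, ← exp_nat_mul,
      Nat.cast_two, sq Z]
  calc ENNReal.ofReal (exp (w x) / Z) * F x * (ENNReal.ofReal (exp (w y) / Z) * G y)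
      = ENNReal.ofReal (exp (w x) / Z) * ENNReal.ofReal (exp (w y) / Z) * (F x * G y) :=
        mul_mul_mul_comm _ _ _ _
    _ ≤ ENNReal.ofReal (exp (w x) / Z) * ENNReal.ofReal (exp (w y) / Z) *
        (ENNReal.ofReal (exp (r ^ 2 * ‖x - y‖ ^ 2 / 4)) * H (midpoint ℝ x y) ^ 2) := by
        exact mul_le_mul_right (h x y) _
    _ = (ENNReal.ofReal (exp (w (midpoint ℝ x y)) / Z) * H (midpoint ℝ x y)) ^ 2 := by
        rw [← mul_assoc, ← ENNReal.ofReal_mul (hdensity_nonneg x),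
          ← ENNReal.ofReal_mul (mul_nonneg (hdensity_nonneg x) (hdensity_nonneg y)), hw, mul_pow,
          ENNReal.ofReal_pow (hdensity_nonneg _)]

variable {φ : E → ℝ}

/-- The Laplace transform form of Maurey's property `(τ)` for strongly log-concave measures. -/
lemma IsMidpointLogConcave.mgf_tilted_mul_mgf_tilted_neg_le [IsFiniteMeasure μ] [NeZero μ]
    (hμ : IsMidpointLogConcave μ) (hφ : LipschitzWith 1 φ) (r : ℝ) (g : E) :
    mgf φ (μ.tilted (gaussianExponent r g)) r * mgf φ (μ.tilted (gaussianExponent r g)) (-r) ≤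
      exp 1 := by
  set ν := μ.tilted (gaussianExponent r g)
  have : IsProbabilityMeasure ν :=
    isProbabilityMeasure_tilted (integrable_exp_gaussianExponent r g)
  have hexp : ∀ s, Continuous fun x => exp (s * φ x) :=
    fun s => (hφ.continuous.const_mul s).rexp
  have hmgf : ∀ s, mgf φ ν s = (∫⁻ x, ENNReal.ofReal (exp (s * φ x)) ∂ν).toReal := fun s =>
    integral_eq_lintegral_of_nonneg_ae (ae_of_all _ fun x => (exp_pos _).le)
      (hexp s).aestronglyMeasurable
  have hlintegral := hμ.lintegral_tilted_mul_le r g (H := fun _ => ENNReal.ofReal (exp (1 / 2)))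
    (hexp r).measurable.ennreal_ofReal (hexp (-r)).measurable.ennreal_ofReal measurable_const
    fun x y => by
      rw [← ENNReal.ofReal_mul (exp_pos _).le, ← ENNReal.ofReal_pow (exp_pos _).le,
        ← ENNReal.ofReal_mul (exp_pos _).le, ← exp_add, ← exp_nat_mul, ← exp_add]
      refine ENNReal.ofReal_le_ofReal (exp_le_exp.2 ?_)
      push_cast
      linarith [mul_sub_le_one_add_sq_mul_sq hφ r x y]
  rw [lintegral_const, measure_univ, mul_one, ← ENNReal.ofReal_pow (exp_pos _).le,
    ← exp_nat_mul, Nat.cast_two, mul_one_div_cancel two_ne_zero] at hlintegral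
  rw [hmgf, hmgf, ← ENNReal.toReal_mul]
  exact ENNReal.toReal_le_of_le_ofReal (exp_pos _).le hlintegral

variable [IsProbabilityMeasure μ] {K : Set E} {r : ℝ}

lemma IsMidpointLogConcave.variance_tilted_le (hμ : IsMidpointLogConcave μ)
    (hφ : LipschitzWith 1 φ) (hK : IsCompact K) (hμK : ∀ᵐ x ∂μ, x ∈ K) (hr : 0 < r) (g : E) :
    Var[φ; μ.tilted (gaussianExponent r g)] ≤ 2 / r ^ 2 := by
  set ν := μ.tilted (gaussianExponent r g)
  have : IsProbabilityMeasure ν :=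
    isProbabilityMeasure_tilted (integrable_exp_gaussianExponent r g)
  have hint : ∀ {f : E → ℝ}, Continuous f → Integrable f ν := fun hf =>
    integrable_of_ae_mem_isCompact hK ((tilted_absolutelyContinuous μ _).ae_le hμK) hf
  have hφ' := hφ.continuous
  have hmemLp : MemLp φ 2 ν :=
    (memLp_two_iff_integrable_sq hφ'.aestronglyMeasurable).2 (hint (hφ'.pow 2))
  have hvar := one_add_sq_mul_variance_le_mgf_mul_mgf_neg hmemLp
    (hint (f := fun x => exp (r * φ x)) (by fun_prop))
    (hint (f := fun x => exp (-r * φ x)) (by fun_prop))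
  have hmgf := hμ.mgf_tilted_mul_mgf_tilted_neg_le hφ r g
  rw [le_div_iff₀ (by positivity)]
  linarith [exp_one_lt_d9]

lemma sq_div_le_of_abs_le_mul {M N Z : ℝ} (hZ : 0 < Z) (hN : |N| ≤ M * Z) :
    N ^ 2 / Z ≤ 2 * N ^ 2 + 2 * M ^ 2 * (Z - 1) ^ 2 := by
  have hN2 : N ^ 2 ≤ M ^ 2 * Z ^ 2 := by
    rw [← sq_abs N, ← mul_pow]
    exact pow_le_pow_left₀ (abs_nonneg _) hN 2
  rw [div_le_iff₀ hZ]
  rcases le_or_gt (1 / 2) Z with hhalf | hhalf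
  · have : 0 ≤ 2 * M ^ 2 * (Z - 1) ^ 2 * Z := by positivity
    nlinarith [sq_nonneg N]
  · have hquarter : 1 / 4 ≤ (Z - 1) ^ 2 := by nlinarith
    have hquad : Z ^ 2 ≤ 2 * (Z - 1) ^ 2 * Z := by nlinarith
    have : 0 ≤ 2 * N ^ 2 * Z := by positivity
    linarith [mul_le_mul_of_nonneg_left hquad (sq_nonneg M)]

lemma IsMidpointLogConcave.integral_sq_mul_exp_gaussianExponent_le (hμ : IsMidpointLogConcave μ)
    (hφ : LipschitzWith 1 φ) (hK : IsCompact K) (hμK : ∀ᵐ x ∂μ, x ∈ K) {M : ℝ}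
    (hM : ∀ᵐ x ∂μ, |φ x| ≤ M) (hr : 0 < r) (g : E) :
    ∫ x, φ x ^ 2 * exp (gaussianExponent r g x) ∂μ ≤
      2 / r ^ 2 * ∫ x, exp (gaussianExponent r g x) ∂μ +
      2 * (∫ x, φ x * exp (gaussianExponent r g x) ∂μ) ^ 2 +
      2 * M ^ 2 * (∫ x, exp (gaussianExponent r g x) ∂μ - 1) ^ 2 := by
  have hwint := integrable_exp_gaussianExponent (μ := μ) r g
  have hvar := hμ.variance_tilted_le hφ hK hμK hr g
  have : IsProbabilityMeasure (μ.tilted (gaussianExponent r g)) :=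
    isProbabilityMeasure_tilted hwint
  have hw := (continuous_gaussianExponent r g).rexp
  have hφ' := hφ.continuous
  have hmean : ∀ f : E → ℝ, ∫ x, f x ∂μ.tilted (gaussianExponent r g) =
      (∫ x, f x * exp (gaussianExponent r g x) ∂μ) / ∫ x, exp (gaussianExponent r g x) ∂μ := by
    intro f
    rw [integral_tilted, ← integral_div]
    exact integral_congr_ae (ae_of_all _ fun x => by simp only [smul_eq_mul]; ring)
  have hmemLp : MemLp φ 2 (μ.tilted (gaussianExponent r g)) :=
    (memLp_two_iff_integrable_sq hφ'.aestronglyMeasurable).2 (integrable_of_ae_mem_isCompact hK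
      ((tilted_absolutelyContinuous μ _).ae_le hμK) (hφ'.pow 2))
  have hbound : |∫ x, φ x * exp (gaussianExponent r g x) ∂μ| ≤
      M * ∫ x, exp (gaussianExponent r g x) ∂μ := by
    rw [← integral_const_mul, ← norm_eq_abs]
    refine norm_integral_le_of_norm_le (hwint.const_mul M) ?_
    filter_upwards [hM] with x hx
    rw [norm_mul, norm_eq_abs, norm_eq_abs, abs_exp]
    exact mul_le_mul_of_nonneg_right hx (exp_pos _).le
  rw [variance_eq_sub hmemLp] at hvar
  simp only [Pi.pow_apply, hmean] at hvar
  set Z := ∫ x, exp (gaussianExponent r g x) ∂μ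
  set N := ∫ x, φ x * exp (gaussianExponent r g x) ∂μ
  have hZ : 0 < Z := integral_exp_pos hwint
  rw [sub_le_iff_le_add, div_le_iff₀ hZ] at hvar
  have hN : (N / Z) ^ 2 * Z = N ^ 2 / Z := by field_simp
  linarith [sq_div_le_of_abs_le_mul hZ hbound]

end Tilt

section GaussianAverage

lemma ae_mem_prod_of_ae_mem {α : Type*} [MeasurableSpace α] {μ : Measure α} {K : Set α}
    (hμK : ∀ᵐ x ∂μ, x ∈ K) : ∀ᵐ z ∂μ.prod μ, z ∈ K ×ˢ K := by
  filter_upwards [Measure.quasiMeasurePreserving_fst.ae hμK,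
    Measure.quasiMeasurePreserving_snd.ae hμK] with z hfst hsnd using ⟨hfst, hsnd⟩

lemma mul_exp_gaussianExponent_eq {E : Type*} [NormedAddCommGroup E] [InnerProductSpace ℝ E]
    (h : E → ℝ) (r : ℝ) (g x : E) :
    h x * exp (gaussianExponent r g x) =
      h x * exp (-(r ^ 2 * ‖x‖ ^ 2 / 2)) * exp ⟪g, r • x⟫ := by
  rw [mul_assoc, ← exp_add, gaussianExponent, inner_smul_right, neg_add_eq_sub]

lemma sq_integral_mul_exp_gaussianExponent {E : Type*} [NormedAddCommGroup E]
    [InnerProductSpace ℝ E] [MeasurableSpace E] (μ : Measure E) [SFinite μ] (h : E → ℝ)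
    (r : ℝ) (g : E) :
    (∫ x, h x * exp (gaussianExponent r g x) ∂μ) ^ 2 =
      ∫ z : E × E, h z.1 * h z.2 * exp (-(r ^ 2 * (‖z.1‖ ^ 2 + ‖z.2‖ ^ 2) / 2)) *
        exp ⟪g, r • (z.1 + z.2)⟫ ∂μ.prod μ := by
  rw [sq, ← integral_prod_mul]
  refine integral_congr_ae (ae_of_all _ fun z => ?_)
  simp only [mul_exp_gaussianExponent_eq, smul_add, inner_add_right, mul_add, add_div, neg_add,
    exp_add]
  ring

variable {E : Type*} [NormedAddCommGroup E] [InnerProductSpace ℝ E] [FiniteDimensional ℝ E]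
  [MeasurableSpace E] [BorelSpace E]

lemma map_inner_stdGaussian (x : E) :
    (stdGaussian E).map (fun g => ⟪g, x⟫) = gaussianReal 0 (‖x‖ ^ 2).toNNReal := by
  have h := IsGaussian.map_eq_gaussianReal (μ := stdGaussian E) (innerSL ℝ x)
  rw [integral_strongDual_stdGaussian, variance_dual_stdGaussian, innerSL_apply_norm] at h
  have hcomm : (fun g => ⟪g, x⟫) = innerSL ℝ x := funext fun g => real_inner_comm x g
  rw [hcomm]
  exact h

lemma integrable_exp_inner_stdGaussian (x : E) :
    Integrable (fun g => exp ⟪g, x⟫) (stdGaussian E) := by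
  have h := integrable_exp_mul_gaussianReal (μ := 0) (v := (‖x‖ ^ 2).toNNReal) 1
  rw [← map_inner_stdGaussian] at h
  simpa only [Function.comp_def, one_mul] using
    h.comp_measurable (f := fun g : E => ⟪g, x⟫) (by fun_prop)

lemma integral_exp_inner_stdGaussian (x : E) :
    ∫ g, exp ⟪g, x⟫ ∂stdGaussian E = exp (‖x‖ ^ 2 / 2) := by
  have h := mgf_gaussianReal (map_inner_stdGaussian x) 1
  rw [Real.coe_toNNReal _ (sq_nonneg _)] at h
  simpa only [mgf, one_mul, mul_one, zero_add, one_pow] using h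

section Fubini

variable {α : Type*} [TopologicalSpace α] [T2Space α] [SecondCountableTopology α]
  [MeasurableSpace α] [OpensMeasurableSpace α] {ρ : Measure α} [IsFiniteMeasure ρ] {K : Set α}
  {h : α → ℝ} {L : α → E}

lemma integrable_mul_exp_inner_stdGaussian_prod (hK : IsCompact K) (hρK : ∀ᵐ a ∂ρ, a ∈ K)
    (hh : Continuous h) (hL : Continuous L) :
    Integrable (fun z : E × α => h z.2 * exp ⟪z.1, L z.2⟫) ((stdGaussian E).prod ρ) := by
  have hcont : Continuous fun z : E × α => h z.2 * exp ⟪z.1, L z.2⟫ := by fun_prop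
  refine (integrable_prod_iff' hcont.aestronglyMeasurable).2
    ⟨ae_of_all _ fun a => (integrable_exp_inner_stdGaussian (L a)).const_mul (h a), ?_⟩
  simp only [norm_mul, norm_eq_abs, abs_exp, integral_const_mul, integral_exp_inner_stdGaussian]
  exact integrable_of_ae_mem_isCompact hK hρK (by fun_prop)

lemma integral_integral_mul_exp_inner_stdGaussian (hK : IsCompact K) (hρK : ∀ᵐ a ∂ρ, a ∈ K)
    (hh : Continuous h) (hL : Continuous L) :
    ∫ g, ∫ a, h a * exp ⟪g, L a⟫ ∂ρ ∂stdGaussian E = ∫ a, h a * exp (‖L a‖ ^ 2 / 2) ∂ρ := by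
  rw [integral_integral_swap (integrable_mul_exp_inner_stdGaussian_prod hK hρK hh hL)]
  simp only [integral_const_mul, integral_exp_inner_stdGaussian]

end Fubini

variable {μ : Measure E} [IsProbabilityMeasure μ] {K : Set E} {h : E → ℝ}

lemma integrable_integral_mul_exp_gaussianExponent (hK : IsCompact K) (hμK : ∀ᵐ x ∂μ, x ∈ K)
    (hh : Continuous h) (r : ℝ) :
    Integrable (fun g => ∫ x, h x * exp (gaussianExponent r g x) ∂μ) (stdGaussian E) := by
  simp only [mul_exp_gaussianExponent_eq]
  exact (integrable_mul_exp_inner_stdGaussian_prod hK hμK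
    (h := fun x => h x * exp (-(r ^ 2 * ‖x‖ ^ 2 / 2))) (L := fun x => r • x) (by fun_prop)
    (by fun_prop)).integral_prod_left

lemma integral_integral_mul_exp_gaussianExponent (hK : IsCompact K) (hμK : ∀ᵐ x ∂μ, x ∈ K)
    (hh : Continuous h) (r : ℝ) :
    ∫ g, ∫ x, h x * exp (gaussianExponent r g x) ∂μ ∂stdGaussian E = ∫ x, h x ∂μ := by
  simp only [mul_exp_gaussianExponent_eq]
  rw [integral_integral_mul_exp_inner_stdGaussian hK hμK
    (h := fun x => h x * exp (-(r ^ 2 * ‖x‖ ^ 2 / 2))) (L := fun x => r • x) (by fun_prop)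
    (by fun_prop)]
  refine integral_congr_ae (ae_of_all _ fun x => ?_)
  simp only [norm_smul, norm_eq_abs, mul_pow, sq_abs]
  rw [mul_assoc, ← exp_add, neg_add_cancel, exp_zero, mul_one]

lemma integrable_sq_integral_mul_exp_gaussianExponent (hK : IsCompact K)
    (hμK : ∀ᵐ x ∂μ, x ∈ K) (hh : Continuous h) (r : ℝ) :
    Integrable (fun g => (∫ x, h x * exp (gaussianExponent r g x) ∂μ) ^ 2) (stdGaussian E) := by
  simp only [sq_integral_mul_exp_gaussianExponent]
  exact (integrable_mul_exp_inner_stdGaussian_prod (hK.prod hK) (ae_mem_prod_of_ae_mem hμK)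
    (h := fun z : E × E => h z.1 * h z.2 * exp (-(r ^ 2 * (‖z.1‖ ^ 2 + ‖z.2‖ ^ 2) / 2)))
    (L := fun z : E × E => r • (z.1 + z.2)) (by fun_prop) (by fun_prop)).integral_prod_left

lemma integral_sq_integral_mul_exp_gaussianExponent (hK : IsCompact K)
    (hμK : ∀ᵐ x ∂μ, x ∈ K) (hh : Continuous h) (r : ℝ) :
    ∫ g, (∫ x, h x * exp (gaussianExponent r g x) ∂μ) ^ 2 ∂stdGaussian E =
      ∫ z : E × E, h z.1 * h z.2 * exp (r ^ 2 * ⟪z.1, z.2⟫) ∂μ.prod μ := by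
  simp only [sq_integral_mul_exp_gaussianExponent]
  rw [integral_integral_mul_exp_inner_stdGaussian (hK.prod hK) (ae_mem_prod_of_ae_mem hμK)
    (h := fun z : E × E => h z.1 * h z.2 * exp (-(r ^ 2 * (‖z.1‖ ^ 2 + ‖z.2‖ ^ 2) / 2)))
    (L := fun z : E × E => r • (z.1 + z.2)) (by fun_prop) (by fun_prop)]
  refine integral_congr_ae (ae_of_all _ fun z => ?_)
  simp only [norm_smul, norm_eq_abs, mul_pow, sq_abs, norm_add_sq_real]
  rw [mul_assoc, ← exp_add]
  ring_nf

lemma integral_sq_integral_exp_gaussianExponent_sub_one (hK : IsCompact K)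
    (hμK : ∀ᵐ x ∂μ, x ∈ K) (r : ℝ) :
    Integrable (fun g => (∫ x, exp (gaussianExponent r g x) ∂μ - 1) ^ 2) (stdGaussian E) ∧
    ∫ g, (∫ x, exp (gaussianExponent r g x) ∂μ - 1) ^ 2 ∂stdGaussian E =
      ∫ z : E × E, exp (r ^ 2 * ⟪z.1, z.2⟫) ∂μ.prod μ - 1 := by
  have hint := integrable_integral_mul_exp_gaussianExponent hK hμK (h := 1) continuous_one r
  have hmean := integral_integral_mul_exp_gaussianExponent hK hμK (h := 1) continuous_one r
  have hint_sq := integrable_sq_integral_mul_exp_gaussianExponent hK hμK (h := 1) continuous_one r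
  have hmean_sq := integral_sq_integral_mul_exp_gaussianExponent hK hμK (h := 1) continuous_one r
  simp only [Pi.one_apply, one_mul, integral_const, probReal_univ, smul_eq_mul, mul_one]
    at hint hmean hint_sq hmean_sq
  have hsub : Integrable (fun g => 2 * ∫ x, exp (gaussianExponent r g x) ∂μ - 1) (stdGaussian E) :=
    (hint.const_mul 2).sub (integrable_const 1)
  have hexpand : ∀ g : E, (∫ x, exp (gaussianExponent r g x) ∂μ - 1) ^ 2 =
      (∫ x, exp (gaussianExponent r g x) ∂μ) ^ 2 -
        (2 * ∫ x, exp (gaussianExponent r g x) ∂μ - 1) := fun g => by ring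
  simp only [hexpand]
  refine ⟨hint_sq.sub hsub, ?_⟩
  rw [integral_sub hint_sq hsub, integral_sub (hint.const_mul 2) (integrable_const 1),
    integral_const_mul, hmean, hmean_sq, integral_const, probReal_univ]
  norm_num

variable {φ : E → ℝ} {r M : ℝ}

lemma IsMidpointLogConcave.integral_sq_le_of_lipschitzWith (hμ : IsMidpointLogConcave μ)
    (hφ : LipschitzWith 1 φ) (hK : IsCompact K) (hμK : ∀ᵐ x ∂μ, x ∈ K)
    (hM : ∀ᵐ x ∂μ, |φ x| ≤ M) (hr : 0 < r) :
    ∫ x, φ x ^ 2 ∂μ ≤ 2 / r ^ 2 +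
      2 * ∫ z : E × E, φ z.1 * φ z.2 * exp (r ^ 2 * ⟪z.1, z.2⟫) ∂μ.prod μ +
      2 * M ^ 2 * (∫ z : E × E, exp (r ^ 2 * ⟪z.1, z.2⟫) ∂μ.prod μ - 1) := by
  have hZ := integrable_integral_mul_exp_gaussianExponent hK hμK (h := 1) continuous_one r
  have hZ_mean := integral_integral_mul_exp_gaussianExponent hK hμK (h := 1) continuous_one r
  simp only [Pi.one_apply, one_mul, integral_const, probReal_univ, smul_eq_mul, mul_one]
    at hZ hZ_mean
  have hN := integrable_sq_integral_mul_exp_gaussianExponent hK hμK hφ.continuous r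
  obtain ⟨hdev, hdev_mean⟩ := integral_sq_integral_exp_gaussianExponent_sub_one hK hμK r
  have hφ_sq : Continuous fun x => φ x ^ 2 := hφ.continuous.pow 2
  have hZN := (hZ.const_mul (2 / r ^ 2)).add (hN.const_mul 2)
  rw [← integral_integral_mul_exp_gaussianExponent hK hμK hφ_sq r,
    ← integral_sq_integral_mul_exp_gaussianExponent hK hμK hφ.continuous r, ← hdev_mean]
  refine (integral_mono (integrable_integral_mul_exp_gaussianExponent hK hμK hφ_sq r)
    (hZN.add (hdev.const_mul (2 * M ^ 2)))
    fun g => hμ.integral_sq_mul_exp_gaussianExponent_le hφ hK hμK hM hr g).trans_eq ?_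
  rw [integral_add' hZN (hdev.const_mul _), integral_add' (hZ.const_mul _) (hN.const_mul _),
    integral_const_mul, integral_const_mul, integral_const_mul, hZ_mean, mul_one]

end GaussianAverage

section CompactSupport

lemma abs_exp_sub_sum_range_le (s : ℝ) (n : ℕ) :
    |exp s - ∑ m ∈ Finset.range n, s ^ m / m.factorial| ≤ |s| ^ n * exp |s| := by
  have h := Complex.norm_exp_sub_sum_le_norm_mul_exp s n
  rw [Complex.norm_real, norm_eq_abs] at h
  exact_mod_cast h

lemma sq_exp_sub_one_le (s : ℝ) : (exp s - 1) ^ 2 ≤ s ^ 2 * exp (2 * |s|) := by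
  have h := pow_le_pow_left₀ (abs_nonneg _) (abs_exp_sub_sum_range_le s 1) 2
  rw [sq_abs, mul_pow, pow_one, sq_abs, ← exp_nat_mul, Nat.cast_two] at h
  simpa using h

lemma exp_le_one_add_add_sq_mul_exp (s : ℝ) : exp s ≤ 1 + s + s ^ 2 * exp (2 * |s|) := by
  have h := (le_abs_self _).trans (abs_exp_sub_sum_range_le s 2)
  rw [sq_abs, Finset.sum_range_succ, Finset.sum_range_one] at h
  have hexp : s ^ 2 * exp |s| ≤ s ^ 2 * exp (2 * |s|) := by
    gcongr
    linarith [abs_nonneg s]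
  norm_num at h
  linarith

lemma sq_integral_mul_le_integral_sq_mul_integral_sq {α : Type*} [MeasurableSpace α]
    {μ : Measure α} {f g : α → ℝ} (hf : Integrable (fun x => f x ^ 2) μ)
    (hg : Integrable (fun x => g x ^ 2) μ) (hfg : Integrable (fun x => f x * g x) μ) :
    (∫ x, f x * g x ∂μ) ^ 2 ≤ (∫ x, f x ^ 2 ∂μ) * ∫ x, g x ^ 2 ∂μ := by
  have hcross : ∀ c : ℝ, Integrable (fun x => c * c * g x ^ 2 + 2 * c * (f x * g x)) μ :=
    fun c => (hg.const_mul _).add (hfg.const_mul _)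
  have hquad : ∀ c : ℝ, 0 ≤ (∫ x, g x ^ 2 ∂μ) * (c * c) + 2 * (∫ x, f x * g x ∂μ) * c +
      ∫ x, f x ^ 2 ∂μ := fun c => by
    have hexpand : ∀ x, (c * g x + f x) ^ 2 =
        c * c * g x ^ 2 + 2 * c * (f x * g x) + f x ^ 2 := fun x => by ring
    have hnonneg : 0 ≤ ∫ x, (c * g x + f x) ^ 2 ∂μ := integral_nonneg fun x => sq_nonneg _
    simp only [hexpand] at hnonneg
    rw [integral_add (hcross c) hf,
      integral_add (hg.const_mul _) (hfg.const_mul _), integral_const_mul,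
      integral_const_mul] at hnonneg
    linarith
  have h := discrim_le_zero hquad
  rw [discrim] at h
  linarith

lemma integrable_prod_of_ae_mem_isCompact {α : Type*} [TopologicalSpace α] [T2Space α]
    [SecondCountableTopology α] [MeasurableSpace α] [OpensMeasurableSpace α] {μ : Measure α}
    [IsFiniteMeasure μ] {K : Set α} (hK : IsCompact K) (hμK : ∀ᵐ x ∂μ, x ∈ K)
    {h : α × α → ℝ} (hh : Continuous h) : Integrable h (μ.prod μ) :=
  integrable_of_ae_mem_isCompact (hK.prod hK) (ae_mem_prod_of_ae_mem hμK) hh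

variable {E : Type*} [NormedAddCommGroup E] [InnerProductSpace ℝ E] [MeasurableSpace E]

/-- The second moment of `t * ⟪X, Y⟫`, weighted by `exp (2 * |t * ⟪X, Y⟫|)`, for `X` and `Y`
independent of law `μ`. The weight makes it dominate both the mean square of
`exp (t * ⟪X, Y⟫) - 1` and the second-order Taylor remainder of `exp (t * ⟪X, Y⟫)`. -/
def innerInteraction (μ : Measure E) (t : ℝ) : ℝ :=
  ∫ z : E × E, (t * ⟪z.1, z.2⟫) ^ 2 * exp (2 * |t * ⟪z.1, z.2⟫|) ∂μ.prod μ

variable [SecondCountableTopology E] [BorelSpace E] {μ : Measure E} [IsProbabilityMeasure μ]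
  {K : Set E}

lemma integral_exp_inner_sub_one_le [CompleteSpace E] (hK : IsCompact K)
    (hμK : ∀ᵐ x ∂μ, x ∈ K) (t : ℝ) :
    ∫ z : E × E, exp (t * ⟪z.1, z.2⟫) ∂μ.prod μ - 1 ≤
      t * ‖∫ x, x ∂μ‖ ^ 2 + innerInteraction μ t := by
  have hint : ∀ {h : E × E → ℝ}, Continuous h → Integrable h (μ.prod μ) :=
    integrable_prod_of_ae_mem_isCompact hK hμK
  have hid : Integrable (fun x => x) μ := (integrable_norm_iff aestronglyMeasurable_id).1
    (integrable_of_ae_mem_isCompact hK hμK continuous_norm)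
  have hrem : Integrable (fun z : E × E =>
      (t * ⟪z.1, z.2⟫) ^ 2 * exp (2 * |t * ⟪z.1, z.2⟫|)) (μ.prod μ) := hint (by fun_prop)
  have hinner : Integrable (fun z : E × E => ⟪z.1, z.2⟫) (μ.prod μ) := hint (by fun_prop)
  have hmean : ∫ z : E × E, ⟪z.1, z.2⟫ ∂μ.prod μ = ‖∫ x, x ∂μ‖ ^ 2 :=
    (integral_prod_bilin (innerSL ℝ) hid hid).trans (real_inner_self_eq_norm_sq _)
  have hlin : Integrable (fun z : E × E => 1 + t * ⟪z.1, z.2⟫) (μ.prod μ) := hint (by fun_prop)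
  rw [sub_le_iff_le_add']
  calc ∫ z : E × E, exp (t * ⟪z.1, z.2⟫) ∂μ.prod μ
      ≤ ∫ z : E × E, (1 + t * ⟪z.1, z.2⟫ +
          (t * ⟪z.1, z.2⟫) ^ 2 * exp (2 * |t * ⟪z.1, z.2⟫|)) ∂μ.prod μ :=
        integral_mono (hint (by fun_prop)) (hlin.add hrem) fun z =>
          exp_le_one_add_add_sq_mul_exp _
    _ = 1 + (t * ‖∫ x, x ∂μ‖ ^ 2 + innerInteraction μ t) := by
        rw [integral_add hlin hrem, integral_add (integrable_const 1) (hinner.const_mul t),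
          integral_const_mul, hmean, integral_const,
          probReal_univ, smul_eq_mul, one_mul, add_assoc, innerInteraction]

variable {φ : E → ℝ}

lemma sq_integral_mul_mul_exp_inner_le (hφ : Continuous φ) (hφ_mean : ∫ x, φ x ∂μ = 0)
    (hK : IsCompact K) (hμK : ∀ᵐ x ∂μ, x ∈ K) (t : ℝ) :
    (∫ z : E × E, φ z.1 * φ z.2 * exp (t * ⟪z.1, z.2⟫) ∂μ.prod μ) ^ 2 ≤
      (∫ x, φ x ^ 2 ∂μ) ^ 2 * innerInteraction μ t := by
  have hint : ∀ {h : E × E → ℝ}, Continuous h → Integrable h (μ.prod μ) :=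
    integrable_prod_of_ae_mem_isCompact hK hμK
  have hcentered : ∫ z : E × E, φ z.1 * φ z.2 ∂μ.prod μ = 0 := by
    rw [integral_prod_mul φ φ, hφ_mean, zero_mul]
  have hsub : ∫ z : E × E, φ z.1 * φ z.2 * exp (t * ⟪z.1, z.2⟫) ∂μ.prod μ =
      ∫ z : E × E, φ z.1 * φ z.2 * (exp (t * ⟪z.1, z.2⟫) - 1) ∂μ.prod μ := by
    simp only [mul_sub, mul_one]
    rw [integral_sub (hint (by fun_prop)) (hint (by fun_prop)), hcentered, sub_zero]
  have hsq : ∫ z : E × E, (φ z.1 * φ z.2) ^ 2 ∂μ.prod μ = (∫ x, φ x ^ 2 ∂μ) ^ 2 := by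
    simp only [mul_pow]
    rw [integral_prod_mul (fun x => φ x ^ 2) (fun x => φ x ^ 2), sq]
  have hrem : ∫ z : E × E, (exp (t * ⟪z.1, z.2⟫) - 1) ^ 2 ∂μ.prod μ ≤ innerInteraction μ t :=
    integral_mono (hint (by fun_prop)) (hint (by fun_prop)) fun z => sq_exp_sub_one_le _
  rw [hsub]
  refine (sq_integral_mul_le_integral_sq_mul_integral_sq (hint (by fun_prop)) (hint (by fun_prop))
    (hint (by fun_prop))).trans ?_
  rw [hsq]
  exact mul_le_mul_of_nonneg_left hrem (sq_nonneg _)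

/-- The interaction term costs at most half of the variance and is absorbed by the left side. -/
lemma IsMidpointLogConcave.integral_sq_le_of_innerInteraction_le [FiniteDimensional ℝ E]
    (hμ : IsMidpointLogConcave μ) (hφ : LipschitzWith 1 φ) (hφ_mean : ∫ x, φ x ∂μ = 0)
    (hK : IsCompact K) (hμK : ∀ᵐ x ∂μ, x ∈ K) {M r : ℝ} (hM : ∀ᵐ x ∂μ, |φ x| ≤ M) (hr : 0 < r)
    (hinteraction : innerInteraction μ (r ^ 2) ≤ 1 / 16) :
    ∫ x, φ x ^ 2 ∂μ ≤ 4 / r ^ 2 +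
      4 * M ^ 2 * (r ^ 2 * ‖∫ x, x ∂μ‖ ^ 2 + innerInteraction μ (r ^ 2)) := by
  have hmain := hμ.integral_sq_le_of_lipschitzWith hφ hK hμK hM hr
  have hdrift := mul_le_mul_of_nonneg_left (integral_exp_inner_sub_one_le hK hμK (r ^ 2))
    (mul_nonneg zero_le_two (sq_nonneg M))
  have hcov := sq_integral_mul_mul_exp_inner_le hφ.continuous hφ_mean hK hμK (r ^ 2)
  have hvar : 0 ≤ ∫ x, φ x ^ 2 ∂μ := integral_nonneg fun x => sq_nonneg _
  have hcov_le : ∫ z : E × E, φ z.1 * φ z.2 * exp (r ^ 2 * ⟪z.1, z.2⟫) ∂μ.prod μ ≤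
      (∫ x, φ x ^ 2 ∂μ) / 4 := by
    refine le_of_sq_le_sq (hcov.trans ?_) (div_nonneg hvar zero_le_four)
    rw [div_pow]
    nlinarith [sq_nonneg (∫ x, φ x ^ 2 ∂μ)]
  rw [show 4 / r ^ 2 = 2 * (2 / r ^ 2) by ring]
  linarith

end CompactSupport

section SecondMoment

lemma norm_sq_eq_sum_inner_stdOrthonormalBasis_sq {E : Type*} [NormedAddCommGroup E]
    [InnerProductSpace ℝ E] [FiniteDimensional ℝ E] (x : E) :
    ‖x‖ ^ 2 = ∑ i, ⟪stdOrthonormalBasis ℝ E i, x⟫ ^ 2 := by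
  simpa only [norm_eq_abs, sq_abs] using
    ((stdOrthonormalBasis ℝ E).sum_sq_norm_inner_right x).symm

/-- The seminorm `|⟪θ, ·⟫|`, to which Borell's lemma is applied. -/
def innerSeminorm {E : Type*} [NormedAddCommGroup E] [InnerProductSpace ℝ E] (θ : E) :
    Seminorm ℝ E := (normSeminorm ℝ ℝ).comp (innerₛₗ ℝ θ)

variable {E : Type*} [NormedAddCommGroup E] [InnerProductSpace ℝ E] [MeasurableSpace E]
  {μ : Measure E} {c : ℝ}

/-- The quadratic form `θ ↦ ∫ x, ⟪θ, x⟫ ^ 2 ∂μ` is finite and at most `c` times the Euclidean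
one. The moments are taken around the origin, so that the bound survives truncation. -/
def SecondMomentLE (μ : Measure E) (c : ℝ) : Prop :=
  ∀ θ : E, Integrable (fun x => ⟪θ, x⟫ ^ 2) μ ∧ ∫ x, ⟪θ, x⟫ ^ 2 ∂μ ≤ c * ‖θ‖ ^ 2

section Norm

variable [FiniteDimensional ℝ E]

lemma SecondMomentLE.integrable_norm_sq (hμ : SecondMomentLE μ c) :
    Integrable (fun x => ‖x‖ ^ 2) μ := by
  simp only [norm_sq_eq_sum_inner_stdOrthonormalBasis_sq]
  exact integrable_finsetSum _ fun i _ => (hμ _).1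

lemma SecondMomentLE.integral_norm_sq_le (hμ : SecondMomentLE μ c) :
    ∫ x, ‖x‖ ^ 2 ∂μ ≤ c * Module.finrank ℝ E := by
  simp only [norm_sq_eq_sum_inner_stdOrthonormalBasis_sq]
  rw [integral_finsetSum _ fun i _ => (hμ _).1]
  calc ∑ i, ∫ x, ⟪stdOrthonormalBasis ℝ E i, x⟫ ^ 2 ∂μ
      ≤ ∑ i, c * ‖stdOrthonormalBasis ℝ E i‖ ^ 2 := Finset.sum_le_sum fun i _ => (hμ _).2
    _ = c * Module.finrank ℝ E := by simp [mul_comm]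

variable [BorelSpace E]

lemma SecondMomentLE.integrable_id [IsFiniteMeasure μ] (hμ : SecondMomentLE μ c) :
    Integrable (fun x => x) μ :=
  (memLp_two_iff_integrable_sq_norm aestronglyMeasurable_id).2 hμ.integrable_norm_sq
    |>.integrable one_le_two

lemma SecondMomentLE.norm_integral_sq_le [IsProbabilityMeasure μ] (hμ : SecondMomentLE μ c)
    (hc : 0 ≤ c) : ‖∫ x, x ∂μ‖ ^ 2 ≤ c := by
  set b := ∫ x, x ∂μ
  have hmean : ∫ x, ⟪b, x⟫ ∂μ = ‖b‖ ^ 2 := by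
    rw [integral_inner hμ.integrable_id, real_inner_self_eq_norm_sq]
  have hsq : (‖b‖ ^ 2) ^ 2 ≤ c * ‖b‖ ^ 2 := by
    have h := sq_integral_mul_le_integral_sq_mul_integral_sq (hμ b).1
      (integrable_const ((1 : ℝ) ^ 2)) ((hμ.integrable_id.const_inner b).mul_const 1)
    simp only [one_pow, integral_const, probReal_univ, smul_eq_mul, mul_one, hmean] at h
    exact h.trans (hμ b).2
  rcases (sq_nonneg ‖b‖).eq_or_lt with hb | hb
  · rwa [← hb]
  · exact le_of_mul_le_mul_right (by rwa [← sq]) hb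

end Norm

variable [BorelSpace E]

lemma SecondMomentLE.lintegral_exp_abs_inner_le [IsProbabilityMeasure μ]
    (hμ : SecondMomentLE μ c) (hμ_logConcave : IsMidpointLogConcave μ) {r : ℝ} (hr : 0 < r)
    (hcr : 9 * c ≤ r ^ 2) {θ : E} (hθ : θ ≠ 0) :
    ∫⁻ x, ENNReal.ofReal (exp (|⟪θ, x⟫| / (4 * (r * ‖θ‖)))) ∂μ ≤ ENNReal.ofReal 3 := by
  have hmeas : Measurable (innerSeminorm θ) :=
    (continuous_const.inner continuous_id).abs.measurable
  have hrθ : 0 < r * ‖θ‖ := mul_pos hr (norm_pos_iff.2 hθ)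
  refine hμ_logConcave.lintegral_exp_seminorm_le hmeas hrθ ?_
  have hmarkov := mul_meas_ge_le_integral_of_nonneg (ae_of_all μ fun x => sq_nonneg ⟪θ, x⟫)
    (hμ θ).1 ((r * ‖θ‖) ^ 2)
  have hset : {x | r * ‖θ‖ ≤ innerSeminorm θ x} = {x | (r * ‖θ‖) ^ 2 ≤ ⟪θ, x⟫ ^ 2} := by
    ext x
    exact (abs_of_pos hrθ ▸ sq_le_sq (a := r * ‖θ‖) (b := ⟪θ, x⟫)).symm
  rw [hset, le_div_iff₀ (by norm_num)]
  refine le_of_mul_le_mul_left ?_ (sq_pos_of_pos hrθ)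
  nlinarith [(hμ θ).2, mul_le_mul_of_nonneg_right hcr (sq_nonneg ‖θ‖)]

lemma sq_mul_exp_two_mul_abs_le {s r t : ℝ} (hr : 0 < r) (ht : 0 ≤ t) (hrt : 16 * r * t ≤ 1) :
    (t * s) ^ 2 * exp (2 * |t * s|) ≤ 128 * (r * t) ^ 2 * exp (|s| / (4 * r)) := by
  set w := |s| / (8 * r) with hw
  have hs : |s| = 8 * r * w := by rw [hw]; field_simp
  have hw₀ : 0 ≤ w := by positivity
  have hts : 2 * |t * s| ≤ w := by
    rw [abs_mul, abs_of_nonneg ht, hs]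
    nlinarith
  have hexp : exp (|s| / (4 * r)) = exp w * exp w := by
    rw [← exp_add]
    congr 1
    rw [hw]
    ring
  have hquad : w ^ 2 ≤ 2 * exp w := by linarith [quadratic_le_exp_of_nonneg hw₀]
  calc (t * s) ^ 2 * exp (2 * |t * s|) ≤ (t * s) ^ 2 * exp w := by gcongr
    _ = 64 * (r * t) ^ 2 * w ^ 2 * exp w := by rw [mul_pow, ← sq_abs s, hs]; ring
    _ ≤ 64 * (r * t) ^ 2 * (2 * exp w) * exp w := by gcongr
    _ = 128 * (r * t) ^ 2 * exp (|s| / (4 * r)) := by rw [hexp]; ring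

lemma SecondMomentLE.integral_inner_sq_mul_exp_le [IsProbabilityMeasure μ]
    (hμ : SecondMomentLE μ c) (hμ_logConcave : IsMidpointLogConcave μ) {r t : ℝ} (hr : 0 < r)
    (hcr : 9 * c ≤ r ^ 2) (ht : 0 ≤ t) {y : E} (hy : 16 * r * (t * ‖y‖) ≤ 1) :
    ∫ x, (t * ⟪y, x⟫) ^ 2 * exp (2 * |t * ⟪y, x⟫|) ∂μ ≤ 384 * (r * t) ^ 2 * ‖y‖ ^ 2 := by
  rcases eq_or_ne y 0 with rfl | hy₀
  · simp
  have hry : 0 < r * ‖y‖ := mul_pos hr (norm_pos_iff.2 hy₀)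
  have hexp := hμ.lintegral_exp_abs_inner_le hμ_logConcave hr hcr hy₀
  have hcont : Continuous fun x => exp (|⟪y, x⟫| / (4 * (r * ‖y‖))) := by fun_prop
  have hint : Integrable (fun x => exp (|⟪y, x⟫| / (4 * (r * ‖y‖)))) μ :=
    ⟨hcont.aestronglyMeasurable, (hasFiniteIntegral_iff_ofReal
      (ae_of_all _ fun x => (exp_pos _).le)).2 (hexp.trans_lt ENNReal.ofReal_lt_top)⟩
  have hpointwise : ∀ x, (t * ⟪y, x⟫) ^ 2 * exp (2 * |t * ⟪y, x⟫|) ≤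
      128 * (r * ‖y‖ * t) ^ 2 * exp (|⟪y, x⟫| / (4 * (r * ‖y‖))) := fun x =>
    sq_mul_exp_two_mul_abs_le hry ht (by linarith)
  have hexp_real : ∫ x, exp (|⟪y, x⟫| / (4 * (r * ‖y‖))) ∂μ ≤ 3 := by
    rw [integral_eq_lintegral_of_nonneg_ae (ae_of_all _ fun x => (exp_pos _).le) hint.1]
    exact ENNReal.toReal_le_of_le_ofReal zero_le_three hexp
  calc ∫ x, (t * ⟪y, x⟫) ^ 2 * exp (2 * |t * ⟪y, x⟫|) ∂μ
      ≤ ∫ x, 128 * (r * ‖y‖ * t) ^ 2 * exp (|⟪y, x⟫| / (4 * (r * ‖y‖))) ∂μ :=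
        integral_mono_of_nonneg (ae_of_all _ fun x => by positivity) (hint.const_mul _)
          (ae_of_all _ hpointwise)
    _ = 128 * (r * ‖y‖ * t) ^ 2 * ∫ x, exp (|⟪y, x⟫| / (4 * (r * ‖y‖))) ∂μ :=
        integral_const_mul _ _
    _ ≤ 128 * (r * ‖y‖ * t) ^ 2 * 3 := by gcongr
    _ = 384 * (r * t) ^ 2 * ‖y‖ ^ 2 := by ring

lemma SecondMomentLE.innerInteraction_le [FiniteDimensional ℝ E] [IsProbabilityMeasure μ]
    (hμ : SecondMomentLE μ c) (hμ_logConcave : IsMidpointLogConcave μ) {r t M : ℝ} (hr : 0 < r)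
    (hcr : 9 * c ≤ r ^ 2) (ht : 0 ≤ t) (hM : ∀ᵐ x ∂μ, ‖x‖ ≤ M) (htM : 16 * r * (t * M) ≤ 1) :
    innerInteraction μ t ≤ 384 * (r * t) ^ 2 * (c * Module.finrank ℝ E) := by
  have hball : ∀ᵐ x ∂μ, x ∈ Metric.closedBall (0 : E) M := by simpa using hM
  have hint : Integrable (fun z : E × E =>
      (t * ⟪z.1, z.2⟫) ^ 2 * exp (2 * |t * ⟪z.1, z.2⟫|)) (μ.prod μ) :=
    integrable_prod_of_ae_mem_isCompact (isCompact_closedBall 0 M) hball (by fun_prop)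
  calc innerInteraction μ t
      = ∫ y, ∫ x, (t * ⟪y, x⟫) ^ 2 * exp (2 * |t * ⟪y, x⟫|) ∂μ ∂μ := integral_prod _ hint
    _ ≤ ∫ y, 384 * (r * t) ^ 2 * ‖y‖ ^ 2 ∂μ := by
        refine integral_mono_ae hint.integral_prod_left (hμ.integrable_norm_sq.const_mul _) ?_
        filter_upwards [hM] with y hy
        exact hμ.integral_inner_sq_mul_exp_le hμ_logConcave hr hcr ht (htM.trans' (by gcongr))
    _ = 384 * (r * t) ^ 2 * ∫ y, ‖y‖ ^ 2 ∂μ := integral_const_mul _ _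
    _ ≤ 384 * (r * t) ^ 2 * (c * Module.finrank ℝ E) := by
        gcongr
        exact hμ.integral_norm_sq_le

end SecondMoment

section BoundedSupport

variable {E : Type*} [NormedAddCommGroup E] [InnerProductSpace ℝ E] [FiniteDimensional ℝ E]
  [MeasurableSpace E] [BorelSpace E] {μ : Measure E} [IsProbabilityMeasure μ]

lemma IsMidpointLogConcave.variance_norm_le_of_innerInteraction_le (hμ : IsMidpointLogConcave μ)
    {M r : ℝ} (hM : ∀ᵐ x ∂μ, ‖x‖ ≤ M) (hr : 0 < r)
    (hinteraction : innerInteraction μ (r ^ 2) ≤ 1 / 16) :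
    Var[fun x => ‖x‖; μ] ≤ 4 / r ^ 2 +
      4 * M ^ 2 * (r ^ 2 * ‖∫ x, x ∂μ‖ ^ 2 + innerInteraction μ (r ^ 2)) := by
  have hball : ∀ᵐ x ∂μ, x ∈ Metric.closedBall (0 : E) M := by simpa using hM
  have hint : Integrable (fun x : E => ‖x‖) μ :=
    integrable_of_ae_mem_isCompact (isCompact_closedBall 0 M) hball continuous_norm
  have hmean₀ : 0 ≤ ∫ x, ‖x‖ ∂μ := integral_nonneg fun x => norm_nonneg x
  have hmeanM : ∫ x, ‖x‖ ∂μ ≤ M := by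
    simpa using integral_mono_ae hint (integrable_const M) hM
  have hcentered : ∫ x, (‖x‖ - ∫ y, ‖y‖ ∂μ) ∂μ = 0 := by
    rw [integral_sub hint (integrable_const _), integral_const, probReal_univ, one_smul, sub_self]
  rw [variance_eq_integral continuous_norm.aemeasurable]
  refine hμ.integral_sq_le_of_innerInteraction_le ?_ hcentered (isCompact_closedBall 0 M) hball ?_
    hr hinteraction
  · simpa using (lipschitzWith_one_norm (E := E)).sub (LipschitzWith.const (∫ y : E, ‖y‖ ∂μ))
  · filter_upwards [hM] with x hx
    rw [abs_le]
    constructor <;> linarith [norm_nonneg x]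

/-- The parameter `r = 1 / (32 * n ^ (1 / 3))` balances the two terms `1 / r ^ 2` and
`n ^ 2 * r ^ 4`. -/
lemma IsMidpointLogConcave.variance_norm_le_of_ae_norm_le_sqrt (hμ : IsMidpointLogConcave μ)
    (hμ_moment : SecondMomentLE μ 2) (hE : 0 < Module.finrank ℝ E)
    (hM : ∀ᵐ x ∂μ, ‖x‖ ≤ 12 * √(Module.finrank ℝ E)) :
    Var[fun x => ‖x‖; μ] ≤ 5000 * ((Module.finrank ℝ E : ℝ) ^ ((1 : ℝ) / 3)) ^ 2 := by
  set n : ℝ := (Module.finrank ℝ E : ℝ)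
  have hn : 1 ≤ n := Nat.one_le_cast.2 hE
  set a := n ^ ((1 : ℝ) / 3) with ha
  have ha₁ : 1 ≤ a := one_le_rpow hn (by norm_num)
  have ha_cube : a ^ 3 = n := by
    rw [ha, ← rpow_natCast, ← rpow_mul (by positivity)]
    norm_num
  have hsqrt : √n ≤ a ^ 2 := by
    rw [sqrt_le_left (by positivity), ← ha_cube, ← pow_mul]
    exact pow_le_pow_right₀ ha₁ (by norm_num)
  set r := 1 / (32 * a) with hr
  have hr_sq : r ^ 2 = 1 / (1024 * a ^ 2) := by rw [hr, div_pow, mul_pow]; norm_num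
  have hrM : 16 * 5 * (r ^ 2 * (12 * √n)) ≤ 1 := by
    rw [hr_sq, ← mul_assoc, mul_one_div, div_mul_eq_mul_div, div_le_one (by positivity)]
    nlinarith
  have hinteraction : innerInteraction μ (r ^ 2) ≤ 1 / 50 / a :=
    calc innerInteraction μ (r ^ 2) ≤ 384 * (5 * r ^ 2) ^ 2 * (2 * n) :=
          hμ_moment.innerInteraction_le hμ (by norm_num) (by norm_num) (sq_nonneg r) hM hrM
      _ = 19200 / 1024 ^ 2 / a := by rw [hr_sq, ← ha_cube]; field_simp; norm_num
      _ ≤ 1 / 50 / a := div_le_div_of_nonneg_right (by norm_num) (by positivity)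
  have hmean : ‖∫ x, x ∂μ‖ ^ 2 ≤ 2 := hμ_moment.norm_integral_sq_le zero_le_two
  have hsmall : innerInteraction μ (r ^ 2) ≤ 1 / 16 := by
    refine hinteraction.trans ((div_le_iff₀ (by positivity)).2 ?_)
    linarith
  calc Var[fun x => ‖x‖; μ] ≤ 4 / r ^ 2 + 4 * (12 * √n) ^ 2 *
        (r ^ 2 * ‖∫ x, x ∂μ‖ ^ 2 + innerInteraction μ (r ^ 2)) :=
        hμ.variance_norm_le_of_innerInteraction_le hM (by positivity) hsmall
    _ ≤ 4 / r ^ 2 + 4 * (12 * √n) ^ 2 * (r ^ 2 * 2 + 1 / 50 / a) := by gcongr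
    _ = 4096 * a ^ 2 + 1.125 * a + 11.52 * a ^ 2 := by
        rw [mul_pow, sq_sqrt (by positivity), hr_sq, ← ha_cube]
        field_simp
        norm_num
        ring
    _ ≤ 5000 * a ^ 2 := by nlinarith

end BoundedSupport

section Truncation

section Cond

variable {Ω : Type*} [MeasurableSpace Ω] {μ : Measure Ω} {s : Set Ω} {f : Ω → ℝ}

lemma integral_cond (μ : Measure Ω) (s : Set Ω) (f : Ω → ℝ) :
    ∫ ω, f ω ∂μ[|s] = (μ.real s)⁻¹ * ∫ ω in s, f ω ∂μ := by
  rw [ProbabilityTheory.cond, integral_smul_measure, ENNReal.toReal_inv, smul_eq_mul,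
    measureReal_def]

lemma integrable_cond (hf : Integrable f μ) (hs : μ s ≠ 0) : Integrable f (μ[|s]) :=
  hf.restrict.smul_measure (ENNReal.inv_ne_top.2 hs)

lemma integral_cond_le_two_mul (hf : Integrable f μ) (hf_nonneg : 0 ≤ f)
    (hs : 1 / 2 ≤ μ.real s) : ∫ ω, f ω ∂μ[|s] ≤ 2 * ∫ ω, f ω ∂μ := by
  rw [integral_cond]
  refine mul_le_mul (inv_le_of_inv_le₀ two_pos (by linarith))
    (setIntegral_le_integral hf (ae_of_all _ hf_nonneg)) (integral_nonneg hf_nonneg) zero_le_two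

lemma setIntegral_le_integral_cond [IsProbabilityMeasure μ] (hf_nonneg : 0 ≤ f) (hs : μ s ≠ 0) :
    ∫ ω in s, f ω ∂μ ≤ ∫ ω, f ω ∂μ[|s] := by
  rw [integral_cond]
  exact le_mul_of_one_le_left (integral_nonneg hf_nonneg)
    (one_le_inv_iff₀.2 ⟨ENNReal.toReal_pos hs (measure_ne_top μ s), measureReal_le_one⟩)

end Cond

variable {E : Type*} [NormedAddCommGroup E] [MeasurableSpace E] {μ : Measure E}

lemma measureReal_le_norm_le (hμ : Integrable (fun x => ‖x‖ ^ 2) μ) {r : ℝ} (hr₀ : 0 < r)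
    (hr : 16 * ∫ x, ‖x‖ ^ 2 ∂μ ≤ r ^ 2) : μ.real {x | r ≤ ‖x‖} ≤ 1 / 16 := by
  have h := mul_meas_ge_le_integral_of_nonneg (ae_of_all μ fun x => sq_nonneg ‖x‖) hμ (r ^ 2)
  simp only [sq_le_sq₀ hr₀.le (norm_nonneg _)] at h
  refine le_of_mul_le_mul_left ?_ (sq_pos_of_pos hr₀)
  linarith

variable [BorelSpace E] [IsProbabilityMeasure μ]

lemma integrable_norm_sub_sq (hμ : Integrable (fun x => ‖x‖ ^ 2) μ) (m : ℝ) :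
    Integrable (fun x => (‖x‖ - m) ^ 2) μ :=
  (((memLp_two_iff_integrable_sq continuous_norm.aestronglyMeasurable).2 hμ).sub
    (memLp_const m)).integrable_sq

lemma sq_integral_norm_le (hμ : Integrable (fun x => ‖x‖ ^ 2) μ) :
    (∫ x, ‖x‖ ∂μ) ^ 2 ≤ ∫ x, ‖x‖ ^ 2 ∂μ := by
  have hvar := variance_nonneg (fun x : E => ‖x‖) μ
  rw [variance_eq_sub ((memLp_two_iff_integrable_sq continuous_norm.aestronglyMeasurable).2 hμ)]
    at hvar
  exact sub_nonneg.1 hvar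

variable [NormedSpace ℝ E] {r m : ℝ}

lemma IsMidpointLogConcave.measureReal_three_mul_le_norm_le (hμ : IsMidpointLogConcave μ)
    (hr : μ.real {x | r ≤ ‖x‖} ≤ 1 / 16) :
    μ.real {x | 3 * r ≤ ‖x‖} ≤ μ.real {x | r ≤ ‖x‖} / 15 := by
  have h := hμ.measureReal_le_mul_le_sq (p := normSeminorm ℝ E) measurable_norm r r
  rw [show 2 * r + r = 3 * r by ring] at h
  simp only [coe_normSeminorm] at h
  nlinarith [measureReal_nonneg (μ := μ) (s := {x | r ≤ ‖x‖}),
    measureReal_nonneg (μ := μ) (s := {x | 3 * r ≤ ‖x‖})]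

lemma IsMidpointLogConcave.half_le_measureReal_ball (hμ : IsMidpointLogConcave μ)
    (hr : μ.real {x | r ≤ ‖x‖} ≤ 1 / 16) : 1 / 2 ≤ μ.real (Metric.ball 0 (3 * r)) := by
  have htail := hμ.measureReal_three_mul_le_norm_le hr
  rw [show {x : E | 3 * r ≤ ‖x‖} = (Metric.ball 0 (3 * r))ᶜ by ext; simp,
    probReal_compl_eq_one_sub measurableSet_ball] at htail
  linarith

/-- Most of the mass outside radius `r` lies in the shell `r ≤ ‖x‖ < 3 * r`, where
`‖x‖ - m ≥ r / 2`. -/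
lemma IsMidpointLogConcave.sq_mul_measureReal_le_setIntegral_ball (hμ : IsMidpointLogConcave μ)
    (hμ_sq : Integrable (fun x => ‖x‖ ^ 2) μ) (hr₀ : 0 ≤ r)
    (hr : μ.real {x | r ≤ ‖x‖} ≤ 1 / 16) (hm : m ≤ r / 2) :
    r ^ 2 * μ.real {x | r ≤ ‖x‖} ≤ 5 * ∫ x in Metric.ball 0 (3 * r), (‖x‖ - m) ^ 2 ∂μ := by
  set S := {x : E | r ≤ ‖x‖}
  set B := Metric.ball (0 : E) (3 * r)
  have hS : MeasurableSet S := measurableSet_le measurable_const measurable_norm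
  have hint := integrable_norm_sub_sq hμ_sq m
  have hshell : μ.real S ≤ 15 / 14 * μ.real (B ∩ S) := by
    have htail : μ.real Bᶜ ≤ μ.real S / 15 := by
      rw [show Bᶜ = {x | 3 * r ≤ ‖x‖} by ext; simp [B]]
      exact hμ.measureReal_three_mul_le_norm_le hr
    have hcover : μ.real S ≤ μ.real (B ∩ S) + μ.real Bᶜ :=
      (measureReal_mono fun x hx => (em (x ∈ B)).imp (And.intro · hx) id).trans
        (measureReal_union_le (B ∩ S) Bᶜ)
    linarith
  have hlower : (r / 2) ^ 2 * μ.real (B ∩ S) ≤ ∫ x in B ∩ S, (‖x‖ - m) ^ 2 ∂μ := by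
    rw [mul_comm, ← smul_eq_mul, ← setIntegral_const]
    refine setIntegral_mono_on (integrable_const _).integrableOn hint.integrableOn
      (measurableSet_ball.inter hS) fun x hx => ?_
    have hx' : r ≤ ‖x‖ := hx.2
    gcongr
    linarith
  have hsubset : ∫ x in B ∩ S, (‖x‖ - m) ^ 2 ∂μ ≤ ∫ x in B, (‖x‖ - m) ^ 2 ∂μ :=
    setIntegral_mono_set hint.integrableOn (ae_of_all _ fun x => sq_nonneg _)
      (ae_of_all _ Set.inter_subset_left)
  calc r ^ 2 * μ.real S ≤ r ^ 2 * (15 / 14 * μ.real (B ∩ S)) := by gcongr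
    _ ≤ 5 * ((r / 2) ^ 2 * μ.real (B ∩ S)) := by
        rw [div_pow]
        nlinarith [show 0 ≤ r ^ 2 * μ.real (B ∩ S) by positivity]
    _ ≤ 5 * ∫ x in B, (‖x‖ - m) ^ 2 ∂μ := by gcongr; exact hlower.trans hsubset

lemma IsMidpointLogConcave.setIntegral_norm_sub_sq_le (hμ : IsMidpointLogConcave μ)
    (hr₀ : 0 < r) (hr : μ.real {x | r ≤ ‖x‖} ≤ 1 / 9) (hm₀ : 0 ≤ m) (hm : m ≤ r) :
    ∫ x in {x | r ≤ ‖x‖}, (‖x‖ - m) ^ 2 ∂μ ≤ 256 * (r ^ 2 * μ.real {x | r ≤ ‖x‖}) := by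
  set S := {x : E | r ≤ ‖x‖}
  have hS : MeasurableSet S := measurableSet_le measurable_const measurable_norm
  have hpointwise : ∀ x ∈ S, (‖x‖ - m) ^ 2 ≤ 32 * r ^ 2 * exp (‖x‖ / (4 * r)) := fun x hx => by
    have hx' : r ≤ ‖x‖ := hx
    have hquad := quadratic_le_exp_of_nonneg (x := ‖x‖ / (4 * r)) (by positivity)
    calc (‖x‖ - m) ^ 2 ≤ ‖x‖ ^ 2 := pow_le_pow_left₀ (by linarith) (by linarith) 2
      _ = 32 * r ^ 2 * ((‖x‖ / (4 * r)) ^ 2 / 2) := by field_simp; norm_num1; ring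
      _ ≤ 32 * r ^ 2 * exp (‖x‖ / (4 * r)) := by
          gcongr
          linarith [show 0 ≤ ‖x‖ / (4 * r) by positivity]
  have hexp : ∫⁻ x in S, ENNReal.ofReal (exp (‖x‖ / (4 * r))) ∂μ ≤ ENNReal.ofReal (8 * μ.real S) :=
    hμ.setLIntegral_exp_seminorm_le (p := normSeminorm ℝ E) measurable_norm hr₀ hr
  rw [integral_eq_lintegral_of_nonneg_ae (ae_of_all _ fun x => sq_nonneg _)
    (Continuous.aestronglyMeasurable (by fun_prop))]
  refine ENNReal.toReal_le_of_le_ofReal (by positivity) ?_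
  calc ∫⁻ x in S, ENNReal.ofReal ((‖x‖ - m) ^ 2) ∂μ
      ≤ ∫⁻ x in S, ENNReal.ofReal (32 * r ^ 2) * ENNReal.ofReal (exp (‖x‖ / (4 * r))) ∂μ := by
        refine setLIntegral_mono' hS fun x hx => ?_
        rw [← ENNReal.ofReal_mul (by positivity)]
        exact ENNReal.ofReal_le_ofReal (hpointwise x hx)
    _ ≤ ENNReal.ofReal (32 * r ^ 2) * ENNReal.ofReal (8 * μ.real S) := by
        rw [lintegral_const_mul' _ _ ENNReal.ofReal_ne_top]
        gcongr
    _ = ENNReal.ofReal (256 * (r ^ 2 * μ.real S)) := by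
        rw [← ENNReal.ofReal_mul (by positivity)]
        congr 1
        ring

lemma IsMidpointLogConcave.integral_norm_sub_sq_le (hμ : IsMidpointLogConcave μ)
    (hμ_sq : Integrable (fun x => ‖x‖ ^ 2) μ) (hr₀ : 0 < r)
    (hr : μ.real {x | r ≤ ‖x‖} ≤ 1 / 16) (hm₀ : 0 ≤ m) (hm : m ≤ r / 2) :
    ∫ x, (‖x‖ - m) ^ 2 ∂μ ≤ 1281 * ∫ x in Metric.ball 0 (3 * r), (‖x‖ - m) ^ 2 ∂μ := by
  have hint := integrable_norm_sub_sq hμ_sq m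
  have hinner : ∫ x in {x | r ≤ ‖x‖}ᶜ, (‖x‖ - m) ^ 2 ∂μ ≤
      ∫ x in Metric.ball 0 (3 * r), (‖x‖ - m) ^ 2 ∂μ := by
    refine setIntegral_mono_set hint.integrableOn (ae_of_all _ fun x => sq_nonneg _)
      (ae_of_all _ fun x hx => mem_ball_zero_iff.2 ?_)
    have hx' : ‖x‖ < r := not_le.1 hx
    linarith
  rw [← integral_add_compl (measurableSet_le measurable_const measurable_norm) hint]
  linarith [hμ.setIntegral_norm_sub_sq_le hr₀ (hr.trans (by norm_num)) hm₀ (by linarith),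
    hμ.sq_mul_measureReal_le_setIntegral_ball hμ_sq hr₀.le hr hm]

lemma IsMidpointLogConcave.variance_norm_le_variance_cond_ball (hμ : IsMidpointLogConcave μ)
    (hμ_sq : Integrable (fun x => ‖x‖ ^ 2) μ) (hr₀ : 0 < r)
    (hr : 16 * ∫ x, ‖x‖ ^ 2 ∂μ ≤ r ^ 2) :
    Var[fun x => ‖x‖; μ] ≤ 1281 * Var[fun x => ‖x‖; μ[|Metric.ball 0 (3 * r)]] := by
  set B := Metric.ball (0 : E) (3 * r)
  have htail : μ.real {x | r ≤ ‖x‖} ≤ 1 / 16 := measureReal_le_norm_le hμ_sq hr₀ hr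
  have hhalf := hμ.half_le_measureReal_ball htail
  have hB : μ B ≠ 0 := fun h => by norm_num [measureReal_def, B, h] at hhalf
  have := cond_isProbabilityMeasure hB
  set m := ∫ x, ‖x‖ ∂μ[|B]
  have hm₀ : 0 ≤ m := integral_nonneg fun x => norm_nonneg x
  have hm : m ≤ r / 2 := by
    refine le_of_sq_le_sq ?_ (by positivity)
    linarith [sq_integral_norm_le (integrable_cond hμ_sq hB),
      integral_cond_le_two_mul hμ_sq (fun x => sq_nonneg ‖x‖) hhalf, sq_nonneg r]
  calc Var[fun x => ‖x‖; μ] = Var[fun x => ‖x‖ - m; μ] :=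
        (variance_sub_const continuous_norm.aestronglyMeasurable m).symm
    _ ≤ ∫ x, (‖x‖ - m) ^ 2 ∂μ :=
        variance_le_expectation_sq (Continuous.aestronglyMeasurable (by fun_prop))
    _ ≤ 1281 * ∫ x in B, (‖x‖ - m) ^ 2 ∂μ := hμ.integral_norm_sub_sq_le hμ_sq hr₀ htail hm₀ hm
    _ ≤ 1281 * ∫ x, (‖x‖ - m) ^ 2 ∂μ[|B] := by
        refine mul_le_mul_of_nonneg_left ?_ (by norm_num)
        exact setIntegral_le_integral_cond (fun x => sq_nonneg (‖x‖ - m)) hB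
    _ = 1281 * Var[fun x => ‖x‖; μ[|B]] := by
        rw [variance_eq_integral continuous_norm.aemeasurable]

end Truncation

section ThinShell

lemma SecondMomentLE.cond {E : Type*} [NormedAddCommGroup E] [InnerProductSpace ℝ E]
    [MeasurableSpace E] {μ : Measure E} {c : ℝ} {s : Set E} (hμ : SecondMomentLE μ c)
    (hs : 1 / 2 ≤ μ.real s) : SecondMomentLE (μ[|s]) (2 * c) := fun θ => by
  have hs₀ : μ s ≠ 0 := fun h => by norm_num [measureReal_def, h] at hs
  refine ⟨integrable_cond (hμ θ).1 hs₀, ?_⟩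
  linarith [integral_cond_le_two_mul (hμ θ).1 (fun x => sq_nonneg ⟪θ, x⟫) hs, (hμ θ).2]

lemma IsMidpointLogConcave.variance_norm_le {E : Type*} [NormedAddCommGroup E]
    [InnerProductSpace ℝ E] [FiniteDimensional ℝ E] [MeasurableSpace E] [BorelSpace E]
    {μ : Measure E} [IsProbabilityMeasure μ] (hμ : IsMidpointLogConcave μ)
    (hμ_moment : SecondMomentLE μ 1) :
    Var[fun x => ‖x‖; μ] ≤ (3000 * (Module.finrank ℝ E : ℝ) ^ ((1 : ℝ) / 3)) ^ 2 := by
  rcases (Module.finrank ℝ E).eq_zero_or_pos with hE | hE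
  · have := Module.finrank_zero_iff.1 hE
    rw [show (fun x : E => ‖x‖) = 0 from funext fun x => by simp [Subsingleton.eq_zero x],
      variance_zero]
    positivity
  set r := 4 * √(Module.finrank ℝ E) with hr
  set B := Metric.ball (0 : E) (3 * r)
  have hr₀ : 0 < r := by positivity
  have hmoment : 16 * ∫ x, ‖x‖ ^ 2 ∂μ ≤ r ^ 2 := by
    rw [hr, mul_pow, sq_sqrt (Nat.cast_nonneg _)]
    linarith [hμ_moment.integral_norm_sq_le]
  have hhalf : 1 / 2 ≤ μ.real B := hμ.half_le_measureReal_ball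
    (measureReal_le_norm_le hμ_moment.integrable_norm_sq hr₀ hmoment)
  have := cond_isProbabilityMeasure (μ := μ) (s := B) fun h => by
    norm_num [measureReal_def, h] at hhalf
  have hB : ∀ᵐ x ∂μ[|B], ‖x‖ ≤ 12 * √(Module.finrank ℝ E) := by
    filter_upwards [ae_cond_mem measurableSet_ball] with x hx
    linarith [mem_ball_zero_iff.1 hx]
  have hcond := (hμ.cond (convex_ball 0 (3 * r)) measurableSet_ball)
    |>.variance_norm_le_of_ae_norm_le_sqrt (by simpa using hμ_moment.cond hhalf) hE hB
  rw [mul_pow]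
  linarith [hμ.variance_norm_le_variance_cond_ball hμ_moment.integrable_norm_sq hr₀ hmoment,
    sq_nonneg ((Module.finrank ℝ E : ℝ) ^ ((1 : ℝ) / 3))]

lemma Isotropic.secondMomentLE_map {Ω : Type*} [MeasurableSpace Ω] {P : Measure Ω} {n : ℕ}
    {X : Ω → EuclideanSpace ℝ (Fin n)} (hX : Isotropic P X) (hX_meas : AEMeasurable X P) :
    SecondMomentLE (P.map X) 1 := fun θ => by
  have hmoment : ∫ x, ⟪θ, x⟫ ^ 2 ∂P.map X = ‖θ‖ ^ 2 := by
    rw [integral_map hX_meas (Continuous.aestronglyMeasurable (by fun_prop)),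
      ← real_inner_self_eq_norm_sq, ← hX.2 θ θ]
    simp only [sq, real_inner_comm θ]
  refine ⟨?_, by rw [hmoment, one_mul]⟩
  rcases eq_or_ne θ 0 with rfl | hθ
  · simp
  · refine Integrable.of_integral_ne_zero ?_
    rw [hmoment]
    positivity

end ThinShell

theorem statement5_general {E Ω : Type*} [NormedAddCommGroup E] [InnerProductSpace ℝ E]
    [FiniteDimensional ℝ E] [MeasurableSpace E] [BorelSpace E] [MeasurableSpace Ω] {P : Measure Ω}
    [IsProbabilityMeasure P] {X : Ω → E} (hX : AEMeasurable X P)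
    (hX_logConcave : IsMidpointLogConcave (P.map X)) (hX_moment : SecondMomentLE (P.map X) 1) :
    √Var[fun ω => ‖X ω‖; P] ≤ 3000 * (Module.finrank ℝ E : ℝ) ^ ((1 : ℝ) / 3) := by
  have := Measure.isProbabilityMeasure_map hX
  refine sqrt_le_left (by positivity) |>.2 ?_
  have hmap := variance_map continuous_norm.aemeasurable hX
  exact hmap ▸ hX_logConcave.variance_norm_le hX_moment

/-- thin-shell width bound `√Var|X| ≤ C n^{1/3}`. -/
theorem statement5 :
    ∃ C : ℝ, 0 < C ∧
      ∀ (n : ℕ) (Ω : Type) (_mΩ : MeasurableSpace Ω) (P : Measure Ω),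
        IsProbabilityMeasure P →
        ∀ (X : Ω → EuclideanSpace ℝ (Fin n)) (f : EuclideanSpace ℝ (Fin n) → ℝ),
          HasDensityFn P X f → IsLogConcaveFn f → Isotropic P X →
          Real.sqrt (variance (fun ω => ‖X ω‖) P) ≤ C * (n : ℝ) ^ ((1:ℝ)/3) := by
  refine ⟨3000, by norm_num, fun n Ω _ P _ X f hX hf hX_iso => ?_⟩
  have hlaw : IsMidpointLogConcave (P.map X) := hX.2 ▸ hf.isMidpointLogConcave_withDensity
  simpa using statement5_general hX.1.aemeasurable hlaw
    (hX_iso.secondMomentLE_map hX.1.aemeasurable)
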